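/- arXiv:2101.08973 — 3 statements merged into one kernel-verified Lean document; each statement's English description precedes it below -/
import Mathlib

section
/- (Proposition 3) Suppose Assumptions 1 and 2 hold, each f_i is continuously differentiable on ℝ^p × ℝ^p, the game mappings F_i are L-Lipschitz on ℝ^p × ℝ^p, ∑_{t=0}^∞ ρ(t) = ∞, and the augmented push-sum dynamics are run with these F_i and with the ergodicity hypothesis in force. Then for every player i the sequence x_i(k) converges, as k → ∞, to x*_i, where x* is the unique Nash equilibrium of the aggregative game. -/
open RealInnerProductSpace Pointwise Filter Topology

/-- Backward product `Φ(k,t) = A(k) A(k−1) ⋯ A(k−t)`. -/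
noncomputable def backProd {N : ℕ} (A : ℕ → Matrix (Fin N) (Fin N) ℝ) (k t : ℕ) :
    Matrix (Fin N) (Fin N) ℝ :=
  ((List.range (t + 1)).map fun s => A (k - s)).prod

/-
The Nash equilibria are the solutions of the variational inequality of the pseudo-gradient `φ`; one
exists because `φ` is monotone and the action sets are compact (a finite Minty problem is solvable
by a theorem of the alternative), and strict monotonicity makes it unique and gives
`⟪φ(x), x - x*⟫ > 0` for `x ≠ x*`.

Push-sum tracks `x̄(k)` with an error that is a geometric convolution of the past increments of `x`,
so it is of order `∑ₜ λ ^ (k - t) q(t)`, where `q` is the order of the stepsizes. As `∑ q² < ∞`,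
replacing `z` by `x̄` costs only summable errors in the descent of `∑ᵢ ‖xᵢ(k) - xᵢ*‖²`. The players'
accumulated stepsizes stay within `O(q)` of each other, and correcting the squared distance by these
mismatches turns the individual stepsizes into a common one. Hence the distance to `x*` converges
while `∑ γ(k) ⟪φ(x(k)), x(k) - x*⟫ < ∞` for a non-summable `γ`, and the limit distance must be `0`.
-/

section VariationalInequality

variable {E : Type*} [NormedAddCommGroup E] [InnerProductSpace ℝ E]

lemma sum_sum_mul_inner_nonneg_of_monotone {κ : Type*} [Fintype κ] {c : κ → ℝ} {g v : κ → E}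
    (hc : ∀ i, 0 ≤ c i) (hmono : ∀ i j, 0 ≤ ⟪g i - g j, v i - v j⟫) :
    0 ≤ ∑ i, ∑ j, c i * c j * ⟪g i, v i - v j⟫ := by
  have symmetrize : ∑ i, ∑ j, c i * c j * ⟪g i - g j, v i - v j⟫ =
      2 * ∑ i, ∑ j, c i * c j * ⟪g i, v i - v j⟫ := by
    have swap : ∑ i, ∑ j, c i * c j * ⟪g j, v i - v j⟫ =
        -∑ i, ∑ j, c i * c j * ⟪g i, v i - v j⟫ := by
      rw [Finset.sum_comm]
      simp only [← Finset.sum_neg_distrib]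
      refine Finset.sum_congr rfl fun i _ => Finset.sum_congr rfl fun j _ => ?_
      rw [← neg_sub (v i), inner_neg_right]
      ring
    simp only [inner_sub_left, mul_sub, Finset.sum_sub_distrib] at swap ⊢
    linarith
  have : 0 ≤ ∑ i, ∑ j, c i * c j * ⟪g i - g j, v i - v j⟫ :=
    Finset.sum_nonneg fun i _ => Finset.sum_nonneg fun j _ =>
      mul_nonneg (mul_nonneg (hc i) (hc j)) (hmono i j)
  linarith

lemma exists_mem_nonneg_or_exists_weights {κ : Type*} [Fintype κ]
    {Q : Set (κ → ℝ)} (hconv : Convex ℝ Q) (hcomp : IsCompact Q) (hne : Q.Nonempty) :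
    (∃ q ∈ Q, 0 ≤ q) ∨ ∃ c ∈ stdSimplex ℝ κ, ∀ q ∈ Q, ∑ i, c i * q i < 0 := by
  classical
  refine or_iff_not_imp_left.2 fun hQ => ?_
  push Not at hQ
  obtain ⟨ℓ, a, b, hQa, hab, hb⟩ := geometric_hahn_banach_compact_closed hconv hcomp
    (convex_Ici (0 : κ → ℝ)) isClosed_Ici (Set.disjoint_left.2 hQ)
  have hb0 : b < 0 := by simpa using hb 0 Set.self_mem_Ici
  set c : κ → ℝ := fun i => ℓ (Pi.single i 1)
  have ℓ_apply : ∀ q, ℓ q = ∑ i, c i * q i := fun q => by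
    conv_lhs => rw [← Finset.univ_sum_single q]
    refine (map_sum ℓ _ _).trans (Finset.sum_congr rfl fun i _ => ?_)
    rw [← mul_one (q i), ← smul_eq_mul, Pi.single_smul, map_smul, smul_eq_mul, smul_eq_mul,
      mul_one, mul_comm]
  have c_nonneg : ∀ i, 0 ≤ c i := fun i => by
    by_contra! hci
    have := hb (Pi.single i (b / c i)) (Pi.single_nonneg.2 (div_nonneg_of_nonpos hb0.le hci.le))
    simp [ℓ_apply, Pi.single_apply, mul_div_cancel₀ b hci.ne] at this
  obtain ⟨q₀, hq₀⟩ := hne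
  have sum_pos : 0 < ∑ i, c i := by
    refine (Finset.sum_nonneg fun i _ => c_nonneg i).lt_of_ne' fun hsum => ?_
    have c_zero : ∀ i, c i = 0 := by
      simpa using (Finset.sum_eq_zero_iff_of_nonneg fun i _ => c_nonneg i).1 hsum
    have := hQa q₀ hq₀
    simp only [ℓ_apply, c_zero, zero_mul, Finset.sum_const_zero] at this
    linarith
  refine ⟨fun i => c i / ∑ j, c j, ⟨fun i => div_nonneg (c_nonneg i) sum_pos.le, ?_⟩,
    fun q hq => ?_⟩
  · rw [← Finset.sum_div, div_self sum_pos.ne']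
  · have : ∑ i, c i * q i < 0 := by linarith [hQa q hq, ℓ_apply q]
    simpa only [div_mul_eq_mul_div, ← Finset.sum_div] using div_neg_of_neg_of_pos this sum_pos

lemma exists_minty_of_finite {κ : Type*} [Finite κ] {K : Set E} {G : E → E}
    (hconv : Convex ℝ K) (hcomp : IsCompact K) (hne : K.Nonempty)
    (hmono : ∀ a ∈ K, ∀ b ∈ K, 0 ≤ ⟪G a - G b, a - b⟫) {v : κ → E} (hv : ∀ i, v i ∈ K) :
    ∃ u ∈ K, ∀ i, 0 ≤ ⟪G (v i), v i - u⟫ := by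
  cases nonempty_fintype κ
  let Ψ : E → κ → ℝ := fun u i => ⟪G (v i), v i - u⟫
  have Ψ_cont : Continuous Ψ := by fun_prop
  have Ψ_image_convex : Convex ℝ (Ψ '' K) := by
    rintro _ ⟨u, hu, rfl⟩ _ ⟨w, hw, rfl⟩ s t hs ht hst
    refine ⟨s • u + t • w, hconv hu hw hs ht hst, funext fun i => ?_⟩
    simp only [Ψ, Pi.add_apply, Pi.smul_apply, smul_eq_mul, inner_sub_right, inner_add_right,
      inner_smul_right]
    linear_combination (-⟪G (v i), v i⟫) * hst
  rcases exists_mem_nonneg_or_exists_weights Ψ_image_convex (hcomp.image Ψ_cont) (hne.image Ψ) with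
    ⟨_, ⟨u, hu, rfl⟩, hnonneg⟩ | ⟨c, ⟨c_nonneg, c_sum⟩, hneg⟩
  · exact ⟨u, hu, hnonneg⟩
  · have hu : ∑ j, c j • v j ∈ K := hconv.sum_mem (fun j _ => c_nonneg j) c_sum fun j _ => hv j
    have Ψ_bary : ∑ i, c i * Ψ (∑ j, c j • v j) i =
        ∑ i, ∑ j, c i * c j * ⟪G (v i), v i - v j⟫ := by
      refine Finset.sum_congr rfl fun i _ => ?_
      simp only [Ψ, inner_sub_right, inner_sum, inner_smul_right, mul_sub, Finset.sum_sub_distrib,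
        ← Finset.mul_sum, ← Finset.sum_mul, c_sum, one_mul, mul_assoc]
    have := sum_sum_mul_inner_nonneg_of_monotone c_nonneg fun i j =>
      hmono (v i) (hv i) (v j) (hv j)
    exact absurd (hneg _ (Set.mem_image_of_mem Ψ hu)) (by rw [Ψ_bary]; exact this.not_gt)

lemma exists_minty {K : Set E} {G : E → E} (hconv : Convex ℝ K) (hcomp : IsCompact K)
    (hne : K.Nonempty) (hmono : ∀ a ∈ K, ∀ b ∈ K, 0 ≤ ⟪G a - G b, a - b⟫) :
    ∃ u ∈ K, ∀ v ∈ K, 0 ≤ ⟪G v, v - u⟫ := by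
  let S : K → Set E := fun v => {u | 0 ≤ ⟪G v, (v : E) - u⟫}
  have S_closed : ∀ v, IsClosed (S v) := fun v =>
    isClosed_le continuous_const (by fun_prop)
  have finite_inter : ∀ s : Finset K, (K ∩ ⋂ v ∈ s, S v).Nonempty := fun s => by
    obtain ⟨u, hu, hmin⟩ := exists_minty_of_finite hconv hcomp hne hmono
      (v := fun w : s => (w : E)) fun w => w.1.2
    exact ⟨u, hu, Set.mem_iInter₂.2 fun v hv => hmin ⟨v, hv⟩⟩
  obtain ⟨u, hu, hmin⟩ := hcomp.inter_iInter_nonempty S S_closed finite_inter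
  exact ⟨u, hu, fun v hv => Set.mem_iInter.1 hmin ⟨v, hv⟩⟩

lemma inner_sub_nonneg_of_minty {K : Set E} {G : E → E} (hconv : Convex ℝ K)
    (hcont : ContinuousOn G K) {u : E} (hu : u ∈ K) (hminty : ∀ v ∈ K, 0 ≤ ⟪G v, v - u⟫) :
    ∀ v ∈ K, 0 ≤ ⟪G u, v - u⟫ := by
  intro v hv
  let γ : ℝ → E := AffineMap.lineMap u v
  have γ_mem : ∀ s ∈ Set.Icc (0 : ℝ) 1, γ s ∈ K := fun s hs => hconv.lineMap_mem hu hv hs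
  have γ_nonneg : ∀ s ∈ Set.Ioo (0 : ℝ) 1, 0 ≤ ⟪G (γ s), v - u⟫ := fun s hs => by
    have := hminty (γ s) (γ_mem s (Set.Ioo_subset_Icc_self hs))
    rw [show γ s - u = s • (v - u) by simp [γ, AffineMap.lineMap_apply], inner_smul_right] at this
    exact nonneg_of_mul_nonneg_right this hs.1
  have γ_tendsto : Tendsto γ (𝓝[>] 0) (𝓝[K] u) := by
    refine tendsto_nhdsWithin_iff.2 ⟨?_, ?_⟩
    · have : Continuous γ := AffineMap.lineMap_continuous
      simpa [γ] using (this.tendsto 0).mono_left nhdsWithin_le_nhds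
    · filter_upwards [Ioo_mem_nhdsGT one_pos] with s hs
      exact γ_mem s (Set.Ioo_subset_Icc_self hs)
  refine ge_of_tendsto (((hcont u hu).tendsto.comp γ_tendsto).inner tendsto_const_nhds) ?_
  filter_upwards [Ioo_mem_nhdsGT one_pos] with s hs using γ_nonneg s hs

theorem exists_variational_inequality {K : Set E} {G : E → E} (hconv : Convex ℝ K)
    (hcomp : IsCompact K) (hne : K.Nonempty) (hcont : ContinuousOn G K)
    (hmono : ∀ a ∈ K, ∀ b ∈ K, 0 ≤ ⟪G a - G b, a - b⟫) :
    ∃ u ∈ K, ∀ v ∈ K, 0 ≤ ⟪G u, v - u⟫ := by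
  obtain ⟨u, hu, hminty⟩ := exists_minty hconv hcomp hne hmono
  exact ⟨u, hu, inner_sub_nonneg_of_minty hconv hcont hu hminty⟩

end VariationalInequality

section FirstOrderOptimality

lemma isMinOn_iff_forall_fderiv_nonneg {V : Type*} [NormedAddCommGroup V] [NormedSpace ℝ V]
    {K : Set V} {g : V → ℝ} {g' : V →L[ℝ] ℝ} {a : V} (hconv : ConvexOn ℝ K g) (ha : a ∈ K)
    (hg : HasFDerivAt g g' a) : IsMinOn g K a ↔ ∀ u ∈ K, 0 ≤ g' (u - a) := by
  refine ⟨fun hmin u hu => ?_, fun hnonneg u hu => ?_⟩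
  · exact hmin.localize.hasFDerivWithinAt_nonneg hg.hasFDerivWithinAt
      (sub_mem_posTangentConeAt_of_segment_subset (hconv.1.segment_subset ha hu))
  · let γ : ℝ →ᵃ[ℝ] V := AffineMap.lineMap a u
    have γ_conv : ConvexOn ℝ (Set.Icc 0 1) (g ∘ γ) :=
      (hconv.comp_affineMap γ).subset (fun s hs => hconv.1.lineMap_mem ha hu hs) (convex_Icc 0 1)
    have γ_deriv : HasDerivAt (g ∘ γ) (g' (u - a)) 0 :=
      HasFDerivAt.comp_hasDerivAt 0 (by simpa [γ] using hg) AffineMap.hasDerivAt_lineMap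
    have := γ_conv.le_slope_of_hasDerivAt (by simp) (by simp) one_pos γ_deriv
    simp only [slope_def_field, Function.comp_apply, γ, AffineMap.lineMap_apply_one,
      AffineMap.lineMap_apply_zero, sub_zero, div_one] at this
    exact sub_nonneg.1 ((hnonneg u hu).trans this)

lemma hasGradientAt_diag {E : Type*} [NormedAddCommGroup E] [InnerProductSpace ℝ E]
    [CompleteSpace E] {f : E → E → ℝ} {a b : E} {c : ℝ}
    (hf : DifferentiableAt ℝ (Function.uncurry f) (a, c • a + b)) :
    HasGradientAt (fun u => f u (c • u + b))
      (gradient (f · (c • a + b)) a + c • gradient (f a) (c • a + b)) a := by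
  set z := c • a + b
  obtain ⟨D, hD⟩ := hf
  have hleft : HasFDerivAt (f · z) (D ∘L .inl ℝ E E) a :=
    HasFDerivAt.comp (f := fun u => (u, z)) a hD (hasFDerivAt_prodMk_left a z)
  have hright : HasFDerivAt (f a) (D ∘L .inr ℝ E E) z :=
    hD.comp z (hasFDerivAt_prodMk_right a z)
  have hdiag : HasFDerivAt (fun u => f u (c • u + b))
      (D ∘L (ContinuousLinearMap.id ℝ E).prod (c • ContinuousLinearMap.id ℝ E)) a :=
    HasFDerivAt.comp (f := fun u => (u, c • u + b)) a hD <|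
      (hasFDerivAt_id a).prodMk (((hasFDerivAt_id a).const_smul c).add_const b)
  rw [hasGradientAt_iff_hasFDerivAt]
  refine hdiag.congr_fderiv (ContinuousLinearMap.ext fun d => ?_)
  have hsplit : D (d, c • d) = D (d, 0) + c * D (0, d) := by
    rw [← smul_eq_mul, ← map_smul, ← map_add, Prod.smul_mk, Prod.mk_add_mk, smul_zero, add_zero,
      zero_add]
  simp [gradient, hleft.fderiv, hright.fderiv, hsplit]

end FirstOrderOptimality

section Aggregate

variable {ι E : Type*} [Fintype ι] [NormedAddCommGroup E] [NormedSpace ℝ E]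

/-- The aggregate action `x̄ = (1/n) ∑ⱼ xⱼ`. -/
noncomputable def aggregate (a : ι → E) : E := (Fintype.card ι : ℝ)⁻¹ • ∑ j, a j

lemma continuous_aggregate : Continuous (aggregate : (ι → E) → E) := by
  unfold aggregate; fun_prop

lemma aggregate_update [DecidableEq ι] (a : ι → E) (i : ι) (u : E) :
    aggregate (Function.update a i u) =
      (Fintype.card ι : ℝ)⁻¹ • u + (Fintype.card ι : ℝ)⁻¹ • ∑ j ∈ Finset.univ.erase i, a j := by
  rw [aggregate, Finset.sum_update_of_mem (Finset.mem_univ i), Finset.sdiff_singleton_eq_erase,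
    smul_add]

lemma sum_sub_aggregate (a : ι → E) : ∑ i, (a i - aggregate a) = 0 := by
  rcases isEmpty_or_nonempty ι with _ | _
  · simp
  · simp [aggregate, ← Nat.cast_smul_eq_nsmul ℝ]

lemma aggregate_sub (a b : ι → E) : aggregate a - aggregate b = aggregate (a - b) := by
  simp [aggregate, smul_sub]

lemma isBigO_aggregate {x : ℕ → ι → E} {q : ℕ → ℝ} (hx : ∀ i, (fun k => x k i) =O[atTop] q) :
    (fun k => aggregate (x k)) =O[atTop] q :=
  (Asymptotics.IsBigO.fun_sum fun i _ => hx i).const_smul_left _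

lemma convexOn_aggregate_update [DecidableEq ι] {X : ι → Set E} {g : E → E → ℝ} {i : ι}
    (hg : ∀ b ∈ (Fintype.card ι : ℝ)⁻¹ • ∑ j ∈ Finset.univ.erase i, X j,
      ConvexOn ℝ (X i) fun u => g u ((Fintype.card ι : ℝ)⁻¹ • u + b))
    {a : ι → E} (ha : ∀ j, a j ∈ X j) :
    ConvexOn ℝ (X i) fun u => g u (aggregate (Function.update a i u)) := by
  simp only [aggregate_update]
  exact hg _ (Set.smul_mem_smul_set (Set.finsetSum_mem_finsetSum _ _ _ fun j _ => ha j))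

/-- Nash equilibrium of the aggregative game with costs `f` and action sets `X`: no unilateral
deviation lowers a player's cost. -/
def IsNashEquilibrium [DecidableEq ι] (f : ι → E → E → ℝ) (X : ι → Set E) (a : ι → E) : Prop :=
  (∀ i, a i ∈ X i) ∧
    ∀ i, ∀ u ∈ X i, f i (a i) (aggregate a) ≤ f i u (aggregate (Function.update a i u))

lemma isNashEquilibrium_iff_sum_erase [DecidableEq ι] {f : ι → E → E → ℝ} {X : ι → Set E}
    {a : ι → E} :
    IsNashEquilibrium f X a ↔ (∀ i, a i ∈ X i) ∧ ∀ i, ∀ u ∈ X i,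
      f i (a i) ((Fintype.card ι : ℝ)⁻¹ • ∑ j, a j) ≤ f i u ((Fintype.card ι : ℝ)⁻¹ • u +
        (Fintype.card ι : ℝ)⁻¹ • ∑ j ∈ Finset.univ.erase i, a j) := by
  simp only [IsNashEquilibrium, aggregate_update]
  rfl

/-- The pseudo-gradient of the mappings `F`: each player evaluates `Fᵢ` at its own action and the
aggregate of all actions. -/
noncomputable def pseudoGradient (F : ι → E → E → E) (a : ι → E) (i : ι) : E :=
  F i (a i) (aggregate a)

lemma continuous_pseudoGradient {F : ι → E → E → E}
    (hF : ∀ i, Continuous (Function.uncurry (F i))) : Continuous (pseudoGradient F) :=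
  continuous_pi fun i => (hF i).comp ((continuous_apply i).prodMk continuous_aggregate)

end Aggregate

section AggregativeGame

variable {ι E : Type*} [Fintype ι] [NormedAddCommGroup E] [InnerProductSpace ℝ E]

/-- The game mapping `Fᵢ(a, z) = ∇ₐ fᵢ(a, z) + (1/n) ∇_z fᵢ(a, z)`. -/
noncomputable def gameMap [CompleteSpace E] (f : ι → E → E → ℝ) (i : ι) (a z : E) : E :=
  gradient (f i · z) a + (Fintype.card ι : ℝ)⁻¹ • gradient (f i a) z

/-- A solution of the variational inequality of the pseudo-gradient over `∏ᵢ X i`, tested one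
player at a time. -/
def IsVariationalEquilibrium (F : ι → E → E → E) (X : ι → Set E) (a : ι → E) : Prop :=
  (∀ i, a i ∈ X i) ∧ ∀ i, ∀ u ∈ X i, 0 ≤ ⟪pseudoGradient F a i, u - a i⟫

/-- Player `i`'s linearized regret at `b` for not having played `a i`, with gradients taken at
`b`. -/
noncomputable def linearRegret (F : ι → E → E → E) (a b : ι → E) (i : ι) : ℝ :=
  ⟪pseudoGradient F b i, b i - a i⟫

/-- Strict monotonicity of the pseudo-gradient over `∏ᵢ X i`. -/
def IsStrictlyMonotone (F : ι → E → E → E) (X : ι → Set E) : Prop :=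
  ∀ a b : ι → E, (∀ i, a i ∈ X i) → (∀ i, b i ∈ X i) → a ≠ b →
    0 < ∑ i, ⟪pseudoGradient F a i - pseudoGradient F b i, a i - b i⟫

theorem isNashEquilibrium_iff_isVariationalEquilibrium [DecidableEq ι] [CompleteSpace E]
    {f : ι → E → E → ℝ} {X : ι → Set E} (hf : ∀ i, Differentiable ℝ (Function.uncurry (f i)))
    (hconv : ∀ a : ι → E, (∀ j, a j ∈ X j) → ∀ i,
      ConvexOn ℝ (X i) fun u => f i u (aggregate (Function.update a i u))) (a : ι → E) :
    IsNashEquilibrium f X a ↔ IsVariationalEquilibrium (gameMap f) X a := by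
  refine and_congr_right fun ha => forall_congr' fun i => ?_
  have hgrad : HasGradientAt (fun u => f i u (aggregate (Function.update a i u)))
      (pseudoGradient (gameMap f) a i) (a i) := by
    have hagg := aggregate_update a i (a i)
    rw [Function.update_eq_self] at hagg
    simp only [aggregate_update, pseudoGradient, gameMap, hagg]
    exact hasGradientAt_diag (hf i _)
  have := isMinOn_iff_forall_fderiv_nonneg (hconv a ha i) (ha i)
    (hasGradientAt_iff_hasFDerivAt.1 hgrad)
  simpa only [isMinOn_iff, Function.update_eq_self, InnerProductSpace.toDual_apply_apply] using this

lemma continuous_linearRegret {F : ι → E → E → E} (hF : ∀ i, Continuous (Function.uncurry (F i)))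
    (a : ι → E) (i : ι) : Continuous fun b => linearRegret F a b i :=
  (continuous_pi_iff.1 (continuous_pseudoGradient hF) i).inner
    ((continuous_apply i).sub continuous_const)

theorem exists_isVariationalEquilibrium {F : ι → E → E → E} {X : ι → Set E}
    (hne : ∀ i, (X i).Nonempty) (hconv : ∀ i, Convex ℝ (X i)) (hcomp : ∀ i, IsCompact (X i))
    (hcont : ∀ i, Continuous (Function.uncurry (F i))) (hmono : IsStrictlyMonotone F X) :
    ∃ a, IsVariationalEquilibrium F X a := by
  classical
  let K : Set (PiLp 2 fun _ : ι => E) := WithLp.ofLp ⁻¹' Set.univ.pi X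
  have K_mem : ∀ {a}, a ∈ K ↔ ∀ i, a i ∈ X i := by simp [K]
  have K_conv : Convex ℝ K :=
    (convex_pi fun i _ => hconv i).linear_preimage (WithLp.linearEquiv 2 ℝ (ι → E)).toLinearMap
  have K_comp : IsCompact K :=
    (PiLp.homeomorph 2 fun _ : ι => E).isCompact_preimage.2 (isCompact_univ_pi hcomp)
  have K_ne : K.Nonempty := ⟨WithLp.toLp 2 fun i => (hne i).some, K_mem.2 fun i => (hne i).some_mem⟩
  let G : PiLp 2 (fun _ : ι => E) → PiLp 2 (fun _ : ι => E) :=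
    fun a => WithLp.toLp 2 (pseudoGradient F a)
  have G_cont : Continuous G := (PiLp.continuous_toLp 2 _).comp <|
    (continuous_pseudoGradient hcont).comp (PiLp.continuous_ofLp 2 _)
  have G_mono : ∀ a ∈ K, ∀ b ∈ K, 0 ≤ ⟪G a - G b, a - b⟫ := fun a ha b hb => by
    rcases eq_or_ne a b with rfl | hab
    · simp
    · rw [PiLp.inner_apply]
      exact (hmono a b (K_mem.1 ha) (K_mem.1 hb) fun h => hab (WithLp.ofLp_injective 2 h)).le
  obtain ⟨a, ha, hvi⟩ := exists_variational_inequality K_conv K_comp K_ne G_cont.continuousOn G_mono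
  refine ⟨a, K_mem.1 ha, fun i u hu => ?_⟩
  have := hvi (a + PiLp.single 2 i (u - a i)) (K_mem.2 fun j => ?_)
  · simpa [G, PiLp.inner_apply, Pi.single_apply, apply_ite] using this
  · rcases eq_or_ne j i with rfl | hj
    · simpa using hu
    · simpa [hj] using K_mem.1 ha j

lemma IsVariationalEquilibrium.sum_linearRegret_pos {F : ι → E → E → E} {X : ι → Set E}
    {a b : ι → E} (ha : IsVariationalEquilibrium F X a) (hmono : IsStrictlyMonotone F X)
    (hb : ∀ i, b i ∈ X i) (hne : b ≠ a) : 0 < ∑ i, linearRegret F a b i :=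
  calc 0 < ∑ i, ⟪pseudoGradient F b i - pseudoGradient F a i, b i - a i⟫ :=
        hmono b a hb ha.1 hne
    _ ≤ ∑ i, linearRegret F a b i := Finset.sum_le_sum fun i _ => by
        rw [inner_sub_left, linearRegret]
        linarith [ha.2 i (b i) (hb i)]

lemma IsVariationalEquilibrium.sum_linearRegret_nonneg {F : ι → E → E → E} {X : ι → Set E}
    {a b : ι → E} (ha : IsVariationalEquilibrium F X a) (hmono : IsStrictlyMonotone F X)
    (hb : ∀ i, b i ∈ X i) : 0 ≤ ∑ i, linearRegret F a b i := by
  rcases eq_or_ne b a with rfl | hne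
  · simp [linearRegret]
  · exact (ha.sum_linearRegret_pos hmono hb hne).le

lemma IsVariationalEquilibrium.eq {F : ι → E → E → E} {X : ι → Set E} {a b : ι → E}
    (ha : IsVariationalEquilibrium F X a) (hb : IsVariationalEquilibrium F X b)
    (hmono : IsStrictlyMonotone F X) : b = a := by
  by_contra hne
  refine (ha.sum_linearRegret_pos hmono hb.1 hne).not_ge (Finset.sum_nonpos fun i _ => ?_)
  rw [linearRegret, ← neg_sub, inner_neg_right, neg_nonpos]
  exact hb.2 i (a i) (ha.1 i)

end AggregativeGame

section Projection

variable {E : Type*} [NormedAddCommGroup E] {K : Set E} {a a' g u v w : E}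

/-- `v` is a nearest point of `K` to `u`; for closed convex `K` this is `v = Π_K u`. -/
def IsNearestPoint (K : Set E) (u v : E) : Prop :=
  v ∈ K ∧ ∀ w ∈ K, ‖u - v‖ ≤ ‖u - w‖

lemma isNearestPoint_self (hu : u ∈ K) : IsNearestPoint K u u :=
  ⟨hu, fun w _ => by simp⟩

variable [InnerProductSpace ℝ E]

lemma IsNearestPoint.inner_nonpos (h : IsNearestPoint K u v) (hconv : Convex ℝ K) (hw : w ∈ K) :
    ⟪u - v, w - v⟫ ≤ 0 := by
  have : Nonempty K := ⟨⟨v, h.1⟩⟩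
  refine (norm_eq_iInf_iff_real_inner_le_zero hconv h.1).1 (le_antisymm ?_ ?_) w hw
  · exact le_ciInf fun w => h.2 w w.2
  · exact ciInf_le ⟨0, Set.forall_mem_range.2 fun w => norm_nonneg _⟩ (⟨v, h.1⟩ : K)

lemma IsNearestPoint.norm_sub_le (h : IsNearestPoint K (a - g) a') (hconv : Convex ℝ K)
    (ha : a ∈ K) : ‖a' - a‖ ≤ ‖g‖ := by
  have hvi : ⟪(a - a') - g, a - a'⟫ ≤ 0 := by
    simpa only [sub_right_comm] using h.inner_nonpos hconv ha
  rw [inner_sub_left, real_inner_self_eq_norm_sq, norm_sub_rev] at hvi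
  have := real_inner_le_norm g (a - a')
  rw [norm_sub_rev a a'] at this
  nlinarith [norm_nonneg (a' - a), norm_nonneg g]

lemma IsNearestPoint.norm_sub_sq_le (h : IsNearestPoint K (a - g) a') (hconv : Convex ℝ K)
    (hu : u ∈ K) : ‖a' - u‖ ^ 2 ≤ ‖a - u‖ ^ 2 - 2 * ⟪g, a - u⟫ + ‖g‖ ^ 2 := by
  have hvi : 0 ≤ ⟪a - g - a', a' - u⟫ := by
    rw [← neg_sub u, inner_neg_right]
    exact neg_nonneg.2 (h.inner_nonpos hconv hu)
  calc ‖a' - u‖ ^ 2 ≤ ‖(a - g - a') + (a' - u)‖ ^ 2 := by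
        rw [norm_add_sq_real]
        linarith [sq_nonneg ‖a - g - a'‖]
    _ = ‖(a - u) - g‖ ^ 2 := by congr 2; abel
    _ = ‖a - u‖ ^ 2 - 2 * ⟪g, a - u⟫ + ‖g‖ ^ 2 := by rw [norm_sub_sq_real, real_inner_comm]

end Projection

section RealSequences

lemma tendsto_and_summable_of_le_sub_add {W a e : ℕ → ℝ} (hW : BddBelow (Set.range W))
    (ha : ∀ k, 0 ≤ a k) (he : Summable e) (hstep : ∀ k, W (k + 1) ≤ W k - a k + e k) :
    (∃ c, Tendsto W atTop (𝓝 c)) ∧ Summable a := by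
  let S : ℕ → ℝ := fun k => ∑ t ∈ Finset.range k, e t
  have S_tendsto : Tendsto S atTop (𝓝 (∑' t, e t)) := he.hasSum.tendsto_sum_nat
  let V : ℕ → ℝ := fun k => W k - S k
  have V_step : ∀ k, a k ≤ V k - V (k + 1) := fun k => by
    simp only [V, S, Finset.sum_range_succ]
    linarith [hstep k]
  obtain ⟨M, hM⟩ := hW
  obtain ⟨C, hC⟩ := S_tendsto.bddAbove_range
  have V_ge : ∀ k, M - C ≤ V k := fun k =>
    sub_le_sub (hM (Set.mem_range_self k)) (hC (Set.mem_range_self k))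
  have V_tendsto : Tendsto V atTop (𝓝 (⨅ k, V k)) := by
    refine tendsto_atTop_ciInf (antitone_nat_of_succ_le fun k => ?_)
      ⟨M - C, Set.forall_mem_range.2 V_ge⟩
    linarith [V_step k, ha k]
  refine ⟨⟨_, (V_tendsto.add S_tendsto).congr fun k => sub_add_cancel _ _⟩, ?_⟩
  refine summable_of_sum_range_le (c := V 0 - (M - C)) ha fun k => ?_
  calc ∑ t ∈ Finset.range k, a t ≤ ∑ t ∈ Finset.range k, (V t - V (t + 1)) :=
        Finset.sum_le_sum fun t _ => V_step t
    _ = V 0 - V k := Finset.sum_range_sub' V k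
    _ ≤ V 0 - (M - C) := sub_le_sub_left (V_ge k) _

-- Adding `(τ i - τ₀) * h i` to the energy `u i` replaces each individual clock increment by the
-- increment of the common clock `τ₀`, at the price of the summable terms in `hvar`.
theorem tendsto_and_summable_of_asynchronous_descent {ι : Type*} [Fintype ι]
    {u h r τ : ι → ℕ → ℝ} {τ₀ : ℕ → ℝ} (hu : ∀ i k, 0 ≤ u i k)
    (hstep : ∀ i k, u i (k + 1) ≤ u i k - (τ i (k + 1) - τ i k) * h i k + r i k)
    (hr : ∀ i, Summable (r i)) (hτ₀ : Monotone τ₀) (hh : ∀ k, 0 ≤ ∑ i, h i k)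
    (hgap : ∀ i, Tendsto (fun k => (τ i k - τ₀ k) * h i k) atTop (𝓝 0))
    (hvar : ∀ i, Summable fun k => (τ i (k + 1) - τ₀ (k + 1)) * (h i (k + 1) - h i k)) :
    (∃ c, Tendsto (fun k => ∑ i, u i k) atTop (𝓝 c)) ∧
      Summable fun k => (τ₀ (k + 1) - τ₀ k) * ∑ i, h i k := by
  let D : ℕ → ℝ := fun k => ∑ i, (τ i k - τ₀ k) * h i k
  have D_tendsto : Tendsto D atTop (𝓝 0) := by
    simpa using tendsto_finsetSum Finset.univ fun i _ => hgap i
  obtain ⟨M, hM⟩ := D_tendsto.bddBelow_range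
  have W_bdd : BddBelow (Set.range fun k => ∑ i, u i k + D k) :=
    ⟨M, Set.forall_mem_range.2 fun k => le_add_of_nonneg_of_le
      (Finset.sum_nonneg fun i _ => hu i k) (hM (Set.mem_range_self k))⟩
  obtain ⟨⟨c, hc⟩, hsum⟩ := tendsto_and_summable_of_le_sub_add W_bdd
    (fun k => mul_nonneg (sub_nonneg.2 (hτ₀ k.le_succ)) (hh k))
    (summable_sum fun i (_ : i ∈ Finset.univ) => (hr i).add (hvar i)) fun k => by
      simp only [D, Finset.mul_sum, ← Finset.sum_add_distrib, ← Finset.sum_sub_distrib]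
      exact Finset.sum_le_sum fun i _ => by linarith [hstep i k]
  exact ⟨⟨c, by simpa using hc.sub D_tendsto⟩, hsum⟩

lemma summable_comp_div {g : ℕ → ℝ} (hg : Summable g) {s : ℕ} (hs : s ≠ 0) :
    Summable fun t => g (t / s) := by
  have : NeZero s := ⟨hs⟩
  have hprod : Summable fun p : ℕ × Fin s => g p.1 * (1 : ℝ) :=
    summable_mul_of_summable_norm hg.norm (g := fun _ : Fin s => (1 : ℝ)) .of_finite
  simpa [Function.comp_def, Nat.divModEquiv] using
    (Nat.divModEquiv s).summable_iff.2 hprod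

/-- The convolution `k ↦ ∑_{t ≤ k} r ^ (k - t) q t` of a sequence with the geometric weights: the
error of a geometrically contracting recursion with inputs `q`. -/
noncomputable def geomConv (r : ℝ) (q : ℕ → ℝ) (k : ℕ) : ℝ :=
  ∑ t ∈ Finset.range (k + 1), r ^ (k - t) * q t

lemma mul_le_geomConv {r : ℝ} (hr : 0 ≤ r) {q : ℕ → ℝ} (hq : ∀ t, 0 ≤ q t) {t k : ℕ}
    (htk : t ≤ k) : r ^ (k - t) * q t ≤ geomConv r q k :=
  Finset.single_le_sum (f := fun t => r ^ (k - t) * q t)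
    (fun t _ => mul_nonneg (pow_nonneg hr _) (hq t)) (Finset.mem_range.2 (Nat.lt_succ_of_le htk))

lemma geomConv_nonneg {r : ℝ} (hr : 0 ≤ r) {q : ℕ → ℝ} (hq : ∀ t, 0 ≤ q t) (k : ℕ) :
    0 ≤ geomConv r q k :=
  Finset.sum_nonneg fun t _ => mul_nonneg (pow_nonneg hr _) (hq t)

lemma isBigO_pow_geomConv {r : ℝ} (hr : 0 ≤ r) {q : ℕ → ℝ} (hq : ∀ t, 0 < q t) :
    (fun k => r ^ k) =O[atTop] geomConv r q := by
  refine .of_bound (q 0)⁻¹ <| .of_forall fun k => ?_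
  rw [Real.norm_of_nonneg (pow_nonneg hr k),
    Real.norm_of_nonneg (geomConv_nonneg hr (fun t => (hq t).le) k), ← div_eq_inv_mul,
    le_div_iff₀ (hq 0)]
  exact mul_le_geomConv hr (fun t => (hq t).le) k.zero_le

lemma isBigO_sum_pow_mul_geomConv {r : ℝ} (hr : 0 < r) {p q : ℕ → ℝ} (hq : ∀ t, 0 < q t)
    (hpq : p =O[atTop] q) :
    (fun k => ∑ t ∈ Finset.range k, r ^ (k - (t + 1)) * p t) =O[atTop] geomConv r q := by
  obtain ⟨C, hC_pos, hC⟩ := Asymptotics.bound_of_isBigO_nat_atTop hpq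
  refine .of_bound (C * r⁻¹) <| .of_forall fun k => ?_
  have term_le : ∀ t ∈ Finset.range k,
      ‖r ^ (k - (t + 1)) * p t‖ ≤ C * r⁻¹ * (r ^ (k - t) * q t) := fun t ht => by
    have hexp : k - t = k - (t + 1) + 1 := by have := Finset.mem_range.1 ht; omega
    have hp : ‖p t‖ ≤ C * q t := by
      simpa only [Real.norm_of_nonneg (hq t).le] using hC (hq t).ne'
    calc ‖r ^ (k - (t + 1)) * p t‖ ≤ r ^ (k - (t + 1)) * (C * q t) := by
          rw [norm_mul, Real.norm_of_nonneg (pow_nonneg hr.le _)]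
          gcongr
      _ = C * r⁻¹ * (r ^ (k - t) * q t) := by rw [hexp, pow_succ]; field_simp
  calc ‖∑ t ∈ Finset.range k, r ^ (k - (t + 1)) * p t‖
      ≤ ∑ t ∈ Finset.range k, C * r⁻¹ * (r ^ (k - t) * q t) := norm_sum_le_of_le _ term_le
    _ ≤ C * r⁻¹ * geomConv r q k := by
        rw [← Finset.mul_sum, geomConv, Finset.sum_range_succ]
        have := (hq k).le
        gcongr
        exact le_add_of_nonneg_right (by positivity)
    _ = C * r⁻¹ * ‖geomConv r q k‖ := by
        rw [Real.norm_of_nonneg (geomConv_nonneg hr.le (fun t => (hq t).le) k)]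

lemma isBigO_geomConv_one {r : ℝ} (hr : 0 ≤ r) (hr1 : r < 1) :
    geomConv r 1 =O[atTop] (1 : ℕ → ℝ) := by
  refine .of_bound (1 - r)⁻¹ <| .of_forall fun k => ?_
  rw [Real.norm_of_nonneg (geomConv_nonneg (q := 1) hr (fun _ => zero_le_one) k), Pi.one_apply,
    norm_one, mul_one]
  calc geomConv r 1 k = ∑ t ∈ Finset.range (k + 1), r ^ t := by
        simpa [geomConv] using Finset.sum_range_reflect (r ^ ·) (k + 1)
    _ ≤ ∑' t, r ^ t := (summable_geometric_of_lt_one hr hr1).sum_le_tsum _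
        fun t _ => pow_nonneg hr t
    _ = (1 - r)⁻¹ := tsum_geometric_of_lt_one hr hr1

lemma summable_mul_geomConv {r : ℝ} (hr : 0 ≤ r) (hr1 : r < 1) {q : ℕ → ℝ} (hq : ∀ t, 0 ≤ q t)
    (hanti : Antitone q) (hsq : Summable fun t => q t ^ 2) :
    Summable fun k => q k * geomConv r q k := by
  have cauchy : Summable fun k => ∑ t ∈ Finset.range (k + 1), q t ^ 2 * r ^ (k - t) :=
    (summable_norm_sum_mul_range_of_summable_norm hsq.norm
      (summable_geometric_of_lt_one hr hr1).norm).of_norm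
  refine cauchy.of_nonneg_of_le (fun k => mul_nonneg (hq k) (geomConv_nonneg hr hq k)) fun k => ?_
  rw [geomConv, Finset.mul_sum]
  refine Finset.sum_le_sum fun t ht => ?_
  calc q k * (r ^ (k - t) * q t) ≤ q t * (r ^ (k - t) * q t) :=
        mul_le_mul_of_nonneg_right (hanti (Nat.le_of_lt_succ (Finset.mem_range.1 ht)))
          (mul_nonneg (pow_nonneg hr _) (hq t))
    _ = q t ^ 2 * r ^ (k - t) := by ring

end RealSequences

lemma eq_of_tendsto_of_summable_mul {S : Type*} [TopologicalSpace S] {K : Set S}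
    (hK : IsCompact K) {H : S → ℝ} (hH : ContinuousOn H K) {a : S}
    (hpos : ∀ b ∈ K, b ≠ a → 0 < H b) {x : ℕ → S} (hx : ∀ k, x k ∈ K) {γ : ℕ → ℝ}
    (hγ : ∀ k, 0 ≤ γ k) (hγ_sum : ¬ Summable γ) (hsum : Summable fun k => γ k * H (x k))
    {V : S → ℝ} (hV : Continuous V) {c : ℝ} (hlim : Tendsto (fun k => V (x k)) atTop (𝓝 c)) :
    c = V a := by
  by_contra hne
  have far : ∀ᶠ k in atTop, dist c (V a) / 2 ≤ dist (V (x k)) (V a) :=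
    (hlim.dist tendsto_const_nhds).eventually_const_le (half_lt_self (dist_pos.2 hne))
  have K_far_comp : IsCompact (K ∩ {b | dist c (V a) / 2 ≤ dist (V b) (V a)}) :=
    hK.inter_right (isClosed_le continuous_const (by fun_prop))
  obtain ⟨k, hk⟩ := far.exists
  obtain ⟨b, ⟨hbK, hb_far⟩, hmin⟩ := K_far_comp.exists_isMinOn ⟨x k, hx k, hk⟩
    (hH.mono Set.inter_subset_left)
  have Hb_pos : 0 < H b := hpos b hbK <| by
    rintro rfl
    rw [Set.mem_ofPred_eq, dist_self] at hb_far
    exact (half_pos (dist_pos.2 hne)).not_ge hb_far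
  refine hγ_sum (.of_norm_bounded_eventually_nat (hsum.mul_left (H b)⁻¹) ?_)
  filter_upwards [far] with k hk
  have hle : H b ≤ H (x k) := hmin ⟨hx k, hk⟩
  rw [Real.norm_of_nonneg (hγ k), ← div_eq_inv_mul, le_div_iff₀ Hb_pos]
  exact mul_le_mul_of_nonneg_left hle (hγ k)

section PushSum

variable {ι E : Type*} [Fintype ι] [NormedAddCommGroup E] {N : ℕ}
  {A : ℕ → Matrix (Fin N) (Fin N) ℝ} {e : ι ↪ Fin N} {B r : ℝ}

/-- Geometric ergodicity: the columns of `A(k) ⋯ A(k - t)` approach a common vector `φ(k)` at the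
rate `r ^ t`. -/
def IsGeometricallyErgodic (A : ℕ → Matrix (Fin N) (Fin N) ℝ) (B r : ℝ) : Prop :=
  ∃ φ : ℕ → Fin N → ℝ, ∀ k t, t ≤ k → ∀ i j, |backProd A k t i j - φ k i| ≤ B * r ^ t

lemma backProd_zero (A : ℕ → Matrix (Fin N) (Fin N) ℝ) (k : ℕ) : backProd A k 0 = A k := by
  simp [backProd]

lemma backProd_succ (A : ℕ → Matrix (Fin N) (Fin N) ℝ) (k t : ℕ) :
    backProd A (k + 1) (t + 1) = A (k + 1) * backProd A k t := by
  rw [backProd, List.range_succ_eq_map]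
  simp [backProd, Function.comp_def]

lemma sum_extend (e : ι ↪ Fin N) (g : ι → E) : ∑ m, Function.extend e g 0 m = ∑ i, g i :=
  (Fintype.sum_of_injective e e.injective g _
    (fun m hm => Function.extend_apply' g (0 : Fin N → E) m hm)
    fun i => (e.injective.extend_apply g 0 i).symm).symm

variable [NormedSpace ℝ E]

lemma sum_smul_eq_sum_backProd {v d : ℕ → Fin N → E} (hv₀ : v 0 = d 0)
    (hv : ∀ k j, v (k + 1) j = ∑ m, A k j m • v k m + d (k + 1) j) (k : ℕ) (j : Fin N) :
    ∑ m, A k j m • v k m =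
      ∑ t ∈ Finset.range (k + 1), ∑ m, backProd A k (k - t) j m • d t m := by
  induction k generalizing j with
  | zero => simp [backProd_zero, hv₀]
  | succ k ih =>
    have propagate : ∀ t ∈ Finset.range (k + 1),
        ∑ m, backProd A (k + 1) (k + 1 - t) j m • d t m =
          ∑ l, A (k + 1) j l • ∑ m, backProd A k (k - t) l m • d t m := fun t ht => by
      rw [Nat.succ_sub (Nat.le_of_lt_succ (Finset.mem_range.1 ht)), backProd_succ]
      simp only [Matrix.mul_apply, Finset.smul_sum, Finset.sum_smul, smul_smul]
      exact Finset.sum_comm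
    rw [Finset.sum_range_succ, Finset.sum_congr rfl propagate, Finset.sum_comm]
    simp only [← Finset.smul_sum, ← ih, hv k, smul_add, Finset.sum_add_distrib, Nat.sub_self,
      backProd_zero]

-- The limiting weights `φ` multiply the total input, so they disappear when that total is zero.
lemma IsGeometricallyErgodic.norm_sum_smul_le (hA : IsGeometricallyErgodic A B r)
    {v : ℕ → Fin N → E} {d : ℕ → ι → E} (hv₀ : v 0 = Function.extend e (d 0) 0)
    (hv : ∀ k j, v (k + 1) j = ∑ m, A k j m • v k m + Function.extend e (d (k + 1)) 0 j) {k : ℕ}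
    (htotal : ∑ t ∈ Finset.range (k + 1), ∑ i, d t i = 0) (j : Fin N) :
    ‖∑ m, A k j m • v k m‖ ≤ B * geomConv r (fun t => ∑ i, ‖d t i‖) k := by
  obtain ⟨φ, hφ⟩ := hA
  let D : ℕ → Fin N → E := fun t => Function.extend e (d t) 0
  have D_norm : ∀ t, ∑ m, ‖D t m‖ = ∑ i, ‖d t i‖ := fun t => by
    rw [← sum_extend e]
    refine Finset.sum_congr rfl fun m _ => ?_
    rw [Function.apply_extend (‖·‖)]
    congr 1
    ext
    simp
  have deviation : ∑ m, A k j m • v k m =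
      ∑ t ∈ Finset.range (k + 1), ∑ m, (backProd A k (k - t) j m - φ k j) • D t m := by
    simp only [sub_smul, Finset.sum_sub_distrib, ← Finset.smul_sum, D, sum_extend, htotal,
      smul_zero, sub_zero]
    exact sum_smul_eq_sum_backProd (d := D) hv₀ hv k j
  calc ‖∑ m, A k j m • v k m‖
      ≤ ∑ t ∈ Finset.range (k + 1), ∑ m, ‖(backProd A k (k - t) j m - φ k j) • D t m‖ := by
        rw [deviation]
        exact (norm_sum_le _ _).trans (Finset.sum_le_sum fun t _ => norm_sum_le _ _)
    _ ≤ ∑ t ∈ Finset.range (k + 1), ∑ m, B * r ^ (k - t) * ‖D t m‖ := by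
        refine Finset.sum_le_sum fun t _ => Finset.sum_le_sum fun m _ => ?_
        rw [norm_smul]
        exact mul_le_mul_of_nonneg_right (hφ k (k - t) (Nat.sub_le k t) j m) (norm_nonneg _)
    _ = B * geomConv r (fun t => ∑ i, ‖d t i‖) k := by
        simp only [geomConv, ← Finset.mul_sum, D_norm, mul_assoc]

/-- The augmented push-sum dynamics on the nodes `Fin N`, where `e` embeds the players and the
nodes outside its range are virtual. The intermediate states `w(k + 1) = A(k) v(k)` are
eliminated. -/
structure IsPushSum (e : ι ↪ Fin N) (A : ℕ → Matrix (Fin N) (Fin N) ℝ) (x : ℕ → ι → E)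
    (v : ℕ → Fin N → E) (y : ℕ → Fin N → ℝ) (z : ℕ → ι → E) : Prop where
  v_zero : v 0 = Function.extend e (x 0) 0
  y_zero : y 0 = Function.extend e (fun _ => 1) 0
  v_succ : ∀ k j, v (k + 1) j = ∑ m, A k j m • v k m + Function.extend e (x (k + 1) - x k) 0 j
  y_succ : ∀ k j, y (k + 1) j = ∑ m, A k j m * y k m
  z_succ : ∀ k i, z (k + 1) i = (y (k + 1) (e i))⁻¹ • ∑ m, A k (e i) m • v k m

lemma IsPushSum.norm_sub_aggregate_le {x z : ℕ → ι → E} {v : ℕ → Fin N → E}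
    {y : ℕ → Fin N → ℝ} (hps : IsPushSum e A x v y z) (hA : IsGeometricallyErgodic A B r) {η : ℝ}
    (hη : 0 < η) (k : ℕ) (i : ι) (hy : η ≤ y (k + 1) (e i)) :
    ‖z (k + 1) i - aggregate (x k)‖ ≤ η⁻¹ * B * (r ^ k * ∑ i, ‖x 0 i - aggregate (x k)‖ +
      ∑ t ∈ Finset.range k, r ^ (k - (t + 1)) * ∑ i, ‖x (t + 1) i - x t i‖) := by
  set c := aggregate (x k)
  let d : ℕ → ι → E
    | 0 => fun i => x 0 i - c
    | t + 1 => x (t + 1) - x t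
  have d_total : ∑ t ∈ Finset.range (k + 1), ∑ i, d t i = 0 := by
    rw [Finset.sum_comm, ← sum_sub_aggregate (x k)]
    refine Finset.sum_congr rfl fun i _ => ?_
    rw [Finset.sum_range_succ']
    simp [d, c, Finset.sum_range_sub (x · i)]
  have consensus : y (k + 1) (e i) • (z (k + 1) i - c) =
      ∑ m, A k (e i) m • (v k m - y k m • c) := by
    have : y (k + 1) (e i) ≠ 0 := (hη.trans_le hy).ne'
    simp only [smul_sub, hps.z_succ, smul_inv_smul₀ this, smul_smul, Finset.sum_sub_distrib,
      ← Finset.sum_smul, ← hps.y_succ]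
  have bound : ‖y (k + 1) (e i) • (z (k + 1) i - c)‖ ≤
      B * geomConv r (fun t => ∑ i, ‖d t i‖) k := by
    rw [consensus]
    refine hA.norm_sum_smul_le (e := e) (v := fun t m => v t m - y t m • c) ?_ ?_ d_total (e i)
    · funext j
      rw [hps.v_zero, hps.y_zero]
      by_cases hj : ∃ i, e i = j
      · obtain ⟨i, rfl⟩ := hj
        simp [d, e.injective.extend_apply]
      · simp [Function.extend_apply' _ _ _ hj]
    · intro t j
      simp only [hps.v_succ, hps.y_succ, smul_sub, Finset.sum_sub_distrib, Finset.sum_smul,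
        smul_smul, d]
      abel
  rw [norm_smul, Real.norm_of_nonneg (hη.le.trans hy), geomConv, Finset.sum_range_succ',
    add_comm (Finset.sum _ _)] at bound
  rw [mul_assoc, ← div_eq_inv_mul, le_div_iff₀' hη]
  exact (mul_le_mul_of_nonneg_right hy (norm_nonneg _)).trans bound

open Asymptotics

lemma IsPushSum.isBigO_sub_aggregate {x z : ℕ → ι → E} {v : ℕ → Fin N → E}
    {y : ℕ → Fin N → ℝ} (hps : IsPushSum e A x v y z) (hA : IsGeometricallyErgodic A B r)
    (hr : 0 < r) {η : ℝ} (hη : 0 < η) (hy : ∀ k i, η ≤ y (k + 1) (e i))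
    (hx : ∀ i, (fun k => x k i) =O[atTop] (1 : ℕ → ℝ)) {q : ℕ → ℝ} (hq : ∀ t, 0 < q t)
    (hstep : ∀ i, (fun k => x (k + 1) i - x k i) =O[atTop] q) (i : ι) :
    (fun k => z (k + 1) i - aggregate (x k)) =O[atTop] geomConv r q := by
  have initial : (fun k => r ^ k * ∑ i, ‖x 0 i - aggregate (x k)‖) =O[atTop] geomConv r q := by
    have deviation : (fun k => ∑ i, ‖x 0 i - aggregate (x k)‖) =O[atTop] (1 : ℕ → ℝ) :=
      IsBigO.fun_sum fun i _ =>
        ((isBigO_const_const _ one_ne_zero _).sub (isBigO_aggregate hx)).norm_left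
    simpa using (isBigO_pow_geomConv hr.le hq).mul deviation
  have increments := isBigO_sum_pow_mul_geomConv hr hq
    (IsBigO.fun_sum fun i (_ : i ∈ Finset.univ) => (hstep i).norm_left)
  refine (IsBigO.of_bound |η⁻¹ * B| <| .of_forall fun k => ?_).trans (initial.add increments)
  exact (hps.norm_sub_aggregate_le hA hη k i (hy k i)).trans
    ((le_abs_self _).trans_eq (abs_mul _ _))

lemma IsPushSum.isBigO_sub_aggregate_one {x z : ℕ → ι → E} {v : ℕ → Fin N → E}
    {y : ℕ → Fin N → ℝ} (hps : IsPushSum e A x v y z) (hA : IsGeometricallyErgodic A B r)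
    (hr : 0 < r) (hr1 : r < 1) {η : ℝ} (hη : 0 < η) (hy : ∀ k i, η ≤ y (k + 1) (e i))
    (hx : ∀ i, (fun k => x k i) =O[atTop] (1 : ℕ → ℝ)) (i : ι) :
    (fun k => z (k + 1) i - aggregate (x k)) =O[atTop] (1 : ℕ → ℝ) :=
  (hps.isBigO_sub_aggregate hA hr hη hy hx (fun _ => one_pos)
    (fun i => ((hx i).comp_tendsto (tendsto_add_atTop_nat 1)).sub (hx i)) i).trans
    (isBigO_geomConv_one hr.le hr1)

end PushSum

section Counters

/-- Stepsize counters of asynchronous players: each increases by at most `σ₂` per iteration, does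
increase within every window of `σ₁` iterations, and no two differ by more than `σ₂`. -/
structure AreCounters {ι : Type*} (l : ι → ℕ → ℕ) (σ₁ σ₂ : ℕ) : Prop where
  le_succ : ∀ i k, l i k ≤ l i (k + 1)
  succ_le : ∀ i k, l i (k + 1) ≤ l i k + σ₂
  exists_lt : ∀ i k, ∃ u, k + 1 ≤ u ∧ u ≤ k + σ₁ ∧ l i u < l i (u + 1)
  gap : ∀ i j k, l i k ≤ l j k + σ₂

/-- The stepsize `α(k)` of a player with counter `l`. -/
noncomputable def stepsize (ρ : ℕ → ℝ) (l : ℕ → ℕ) (k : ℕ) : ℝ :=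
  ∑ t ∈ Finset.Ico (l k) (l (k + 1)), ρ t

/-- The clock of a player with counter `l`: its accumulated stepsize, counted from counter value
`0`. -/
noncomputable def clock (ρ : ℕ → ℝ) (l : ℕ → ℕ) (k : ℕ) : ℝ :=
  ∑ t ∈ Finset.range (l k), ρ t

/-- The sequence `ρ` slowed down by the factor `σ`, which dominates the stepsizes of counters that
increase at least once every `σ` iterations. -/
noncomputable def slowed (ρ : ℕ → ℝ) (σ : ℕ) (k : ℕ) : ℝ :=
  ρ ((k - 1) / σ)

variable {ι : Type*} {l : ι → ℕ → ℕ} {σ₁ σ₂ : ℕ} {ρ : ℕ → ℝ}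

lemma antitone_slowed (hρ : Antitone ρ) (σ : ℕ) : Antitone (slowed ρ σ) := fun _ _ hab =>
  hρ (Nat.div_le_div_right (Nat.sub_le_sub_right hab 1))

lemma summable_slowed_sq (hρ : Summable fun t => ρ t ^ 2) {σ : ℕ} (hσ : σ ≠ 0) :
    Summable fun k => slowed ρ σ k ^ 2 :=
  (summable_nat_add_iff 1).1 (summable_comp_div hρ hσ)

lemma tendsto_slowed (hρ : ∀ t, 0 ≤ ρ t) (hsq : Summable fun t => ρ t ^ 2) {σ : ℕ} (hσ : σ ≠ 0) :
    Tendsto (slowed ρ σ) atTop (𝓝 0) := by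
  have := (summable_slowed_sq hsq hσ).tendsto_atTop_zero.sqrt
  simp only [slowed, Real.sqrt_sq (hρ _), Real.sqrt_zero] at this
  exact this

lemma stepsize_eq_clock_sub {l : ℕ → ℕ} {k : ℕ} (hl : l k ≤ l (k + 1)) :
    stepsize ρ l k = clock ρ l (k + 1) - clock ρ l k :=
  Finset.sum_Ico_eq_sub ρ hl

lemma stepsize_nonneg (hρ : ∀ t, 0 ≤ ρ t) (l : ℕ → ℕ) (k : ℕ) : 0 ≤ stepsize ρ l k :=
  Finset.sum_nonneg fun t _ => hρ t

lemma abs_sum_range_sub_sum_range_le (hρ : ∀ t, 0 ≤ ρ t) (hanti : Antitone ρ) {a b c s : ℕ}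
    (hca : c ≤ a) (hcb : c ≤ b) (hab : a ≤ b + s) (hba : b ≤ a + s) :
    |∑ t ∈ Finset.range a, ρ t - ∑ t ∈ Finset.range b, ρ t| ≤ s * ρ c := by
  wlog hle : b ≤ a generalizing a b
  · rw [abs_sub_comm]
    exact this hcb hca hba hab (le_of_not_ge hle)
  rw [← Finset.sum_Ico_eq_sub ρ hle, abs_of_nonneg (Finset.sum_nonneg fun t _ => hρ t)]
  calc ∑ t ∈ Finset.Ico b a, ρ t ≤ (Finset.Ico b a).card • ρ c :=
        Finset.sum_le_card_nsmul _ _ _ fun t ht => hanti (hcb.trans (Finset.mem_Ico.1 ht).1)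
    _ ≤ s * ρ c := by
        rw [nsmul_eq_mul, Nat.card_Ico]
        exact mul_le_mul_of_nonneg_right (by exact_mod_cast Nat.sub_le_iff_le_add'.2 hab) (hρ c)

namespace AreCounters

lemma div_le (hl : AreCounters l σ₁ σ₂) (i : ι) (k : ℕ) : (k - 1) / σ₁ ≤ l i k := by
  have mono : Monotone (l i) := monotone_nat_of_le_succ (hl.le_succ i)
  have window : ∀ m, m ≤ l i (m * σ₁ + 1) := fun m => by
    induction m with
    | zero => exact Nat.zero_le _
    | succ m ih =>
      obtain ⟨u, hu_ge, hu_le, hu_lt⟩ := hl.exists_lt i (m * σ₁)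
      calc m + 1 ≤ l i u + 1 := by gcongr; exact ih.trans (mono hu_ge)
        _ ≤ l i (u + 1) := hu_lt
        _ ≤ l i ((m + 1) * σ₁ + 1) := mono (by rw [Nat.succ_mul]; omega)
  rcases k.eq_zero_or_pos with rfl | hk
  · simp
  · refine (window _).trans (mono ?_)
    have := Nat.div_mul_le_self (k - 1) σ₁
    omega

lemma stepsize_le (hl : AreCounters l σ₁ σ₂) (hρ : ∀ t, 0 ≤ ρ t) (hanti : Antitone ρ) (i : ι)
    (k : ℕ) : stepsize ρ (l i) k ≤ σ₂ * slowed ρ σ₁ k := by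
  rw [stepsize_eq_clock_sub (hl.le_succ i k)]
  exact (le_abs_self _).trans <| abs_sum_range_sub_sum_range_le hρ hanti
    ((hl.div_le i k).trans (hl.le_succ i k)) (hl.div_le i k) (hl.succ_le i k)
    ((hl.le_succ i k).trans (Nat.le_add_right _ _))

lemma isBigO_stepsize (hl : AreCounters l σ₁ σ₂) (hρ : ∀ t, 0 ≤ ρ t) (hanti : Antitone ρ)
    (i : ι) : stepsize ρ (l i) =O[atTop] slowed ρ σ₁ :=
  .of_bound σ₂ <| .of_forall fun k => by
    rw [Real.norm_of_nonneg (stepsize_nonneg hρ _ k), slowed, Real.norm_of_nonneg (hρ _)]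
    exact hl.stepsize_le hρ hanti i k

lemma isBigO_clock_sub (hl : AreCounters l σ₁ σ₂) (hρ : ∀ t, 0 ≤ ρ t) (hanti : Antitone ρ)
    (i j : ι) : (fun k => clock ρ (l i) k - clock ρ (l j) k) =O[atTop] slowed ρ σ₁ :=
  .of_bound σ₂ <| .of_forall fun k => by
    rw [Real.norm_eq_abs, slowed, Real.norm_of_nonneg (hρ _)]
    exact abs_sum_range_sub_sum_range_le hρ hanti (hl.div_le i k) (hl.div_le j k) (hl.gap i j k)
      (hl.gap j i k)

lemma isBigO_clock_sub_succ (hl : AreCounters l σ₁ σ₂) (hρ : ∀ t, 0 ≤ ρ t) (hanti : Antitone ρ)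
    (i j : ι) :
    (fun k => clock ρ (l i) (k + 1) - clock ρ (l j) (k + 1)) =O[atTop] slowed ρ σ₁ :=
  ((hl.isBigO_clock_sub hρ hanti i j).comp_tendsto (tendsto_add_atTop_nat 1)).trans <|
    .of_norm_le fun k => by
      rw [Function.comp_apply, slowed, Real.norm_of_nonneg (hρ _)]
      exact antitone_slowed hanti σ₁ k.le_succ

lemma monotone_clock (hl : AreCounters l σ₁ σ₂) (hρ : ∀ t, 0 ≤ ρ t) (i : ι) :
    Monotone (clock ρ (l i)) := monotone_nat_of_le_succ fun k =>
  sub_nonneg.1 ((stepsize_nonneg hρ (l i) k).trans_eq (stepsize_eq_clock_sub (hl.le_succ i k)))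

lemma not_summable_stepsize (hl : AreCounters l σ₁ σ₂) (hσ₁ : σ₁ ≠ 0) (hρ : ∀ t, 0 ≤ ρ t)
    (hdiv : ¬ Summable ρ) (i : ι) : ¬ Summable (stepsize ρ (l i)) := by
  rw [not_summable_iff_tendsto_nat_atTop_of_nonneg (stepsize_nonneg hρ (l i))]
  have l_tendsto : Tendsto (l i) atTop atTop := by
    refine tendsto_atTop_mono (hl.div_le i) ?_
    exact (Nat.tendsto_div_const_atTop hσ₁).comp (tendsto_sub_atTop_nat 1)
  have clock_tendsto : Tendsto (clock ρ (l i)) atTop atTop :=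
    ((not_summable_iff_tendsto_nat_atTop_of_nonneg hρ).1 hdiv).comp l_tendsto
  refine (tendsto_atTop_add_const_right _ (-clock ρ (l i) 0) clock_tendsto).congr fun k => ?_
  rw [← sub_eq_add_neg, ← Finset.sum_range_sub]
  exact Finset.sum_congr rfl fun t _ => (stepsize_eq_clock_sub (hl.le_succ i t)).symm

end AreCounters

end Counters

section Convergence

open Asymptotics

lemma isBigO_sub_of_lipschitzWith {E G H : Type*} [SeminormedAddCommGroup E]
    [SeminormedAddCommGroup G] [SeminormedAddCommGroup H] {K : NNReal} {F : E → G → H}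
    (hF : LipschitzWith K (Function.uncurry F)) {a a' : ℕ → E} {b b' : ℕ → G} {q : ℕ → ℝ}
    (ha : (fun k => a k - a' k) =O[atTop] q) (hb : (fun k => b k - b' k) =O[atTop] q) :
    (fun k => F (a k) (b k) - F (a' k) (b' k)) =O[atTop] q :=
  (IsBigO.of_bound K <| .of_forall fun k => hF.norm_sub_le (a k, b k) (a' k, b' k)).trans
    (ha.prod_left hb)

lemma isBigO_one_of_lipschitzWith {E G H : Type*} [SeminormedAddCommGroup E]
    [SeminormedAddCommGroup G] [SeminormedAddCommGroup H] {K : NNReal} {F : E → G → H}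
    (hF : LipschitzWith K (Function.uncurry F)) {a : ℕ → E} {b : ℕ → G}
    (ha : a =O[atTop] (1 : ℕ → ℝ)) (hb : b =O[atTop] (1 : ℕ → ℝ)) :
    (fun k => F (a k) (b k)) =O[atTop] (1 : ℕ → ℝ) := by
  have := isBigO_sub_of_lipschitzWith hF (a' := 0) (b' := 0) (by simpa using ha) (by simpa using hb)
  simpa using this.add (isBigO_const_const (F 0 0) one_ne_zero atTop)

lemma isBigO_inner {E : Type*} [SeminormedAddCommGroup E] [InnerProductSpace ℝ E] {a b : ℕ → E}
    {p q : ℕ → ℝ} (ha : a =O[atTop] p) (hb : b =O[atTop] q) :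
    (fun k => ⟪a k, b k⟫) =O[atTop] fun k => p k * q k :=
  (IsBigO.of_norm_le fun k => norm_inner_le_norm (𝕜 := ℝ) (a k) (b k)).trans
    (ha.norm_left.mul hb.norm_left)

variable {ι E : Type*} [NormedAddCommGroup E] {F : ι → E → E → E} {X : ι → Set E}
  {α : ι → ℕ → ℝ} {x z : ℕ → ι → E} {K : NNReal} {a : ι → E} {q δ : ℕ → ℝ}

section NormedSpace

variable [NormedSpace ℝ E]

/-- Projected gradient play with stepsizes `α`, where player `i` uses `z (k + 1) i` as its estimate
of the aggregate at time `k`. An idle player is one with stepsize `0`. -/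
structure IsProjectedGradientPlay (F : ι → E → E → E) (X : ι → Set E) (α : ι → ℕ → ℝ)
    (x z : ℕ → ι → E) : Prop where
  zero_mem : ∀ i, x 0 i ∈ X i
  isNearestPoint : ∀ k i,
    IsNearestPoint (X i) (x k i - α i k • F i (x k i) (z (k + 1) i)) (x (k + 1) i)

namespace IsProjectedGradientPlay

lemma mem (hplay : IsProjectedGradientPlay F X α x z) : ∀ k i, x k i ∈ X i
  | 0, i => hplay.zero_mem i
  | k + 1, i => (hplay.isNearestPoint k i).1

lemma isBigO_one (hplay : IsProjectedGradientPlay F X α x z) (hcomp : ∀ i, IsCompact (X i))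
    (i : ι) : (fun k => x k i) =O[atTop] (1 : ℕ → ℝ) := by
  obtain ⟨M, hM⟩ := (hcomp i).isBounded.exists_norm_le
  exact .of_bound M <| .of_forall fun k => by simpa using hM _ (hplay.mem k i)

lemma isBigO_sub_const (hplay : IsProjectedGradientPlay F X α x z)
    (hcomp : ∀ i, IsCompact (X i)) (a : ι → E) (i : ι) :
    (fun k => x k i - a i) =O[atTop] (1 : ℕ → ℝ) :=
  (hplay.isBigO_one hcomp i).sub (isBigO_const_const (a i) one_ne_zero atTop)

variable [Fintype ι]

lemma isBigO_mapping (hplay : IsProjectedGradientPlay F X α x z) (hcomp : ∀ i, IsCompact (X i))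
    (hF : ∀ i, LipschitzWith K (Function.uncurry (F i)))
    (hz : ∀ i, (fun k => z (k + 1) i - aggregate (x k)) =O[atTop] (1 : ℕ → ℝ)) (i : ι) :
    (fun k => F i (x k i) (z (k + 1) i)) =O[atTop] (1 : ℕ → ℝ) :=
  isBigO_one_of_lipschitzWith (hF i) (hplay.isBigO_one hcomp i) <| by
    simpa using (hz i).add (isBigO_aggregate (hplay.isBigO_one hcomp))

lemma isBigO_pseudoGradient (hplay : IsProjectedGradientPlay F X α x z)
    (hcomp : ∀ i, IsCompact (X i)) (hF : ∀ i, LipschitzWith K (Function.uncurry (F i))) (i : ι) :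
    (fun k => pseudoGradient F (x k) i) =O[atTop] (1 : ℕ → ℝ) :=
  isBigO_one_of_lipschitzWith (hF i) (hplay.isBigO_one hcomp i)
    (isBigO_aggregate (hplay.isBigO_one hcomp))

end IsProjectedGradientPlay

end NormedSpace

variable [InnerProductSpace ℝ E] [Fintype ι]

namespace IsProjectedGradientPlay

lemma isBigO_step (hplay : IsProjectedGradientPlay F X α x z) (hconv : ∀ i, Convex ℝ (X i))
    (hcomp : ∀ i, IsCompact (X i)) (hF : ∀ i, LipschitzWith K (Function.uncurry (F i)))
    (hz : ∀ i, (fun k => z (k + 1) i - aggregate (x k)) =O[atTop] (1 : ℕ → ℝ))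
    (hα : ∀ i, α i =O[atTop] q) (i : ι) : (fun k => x (k + 1) i - x k i) =O[atTop] q :=
  (IsBigO.of_norm_le fun k =>
    (hplay.isNearestPoint k i).norm_sub_le (hconv i) (hplay.mem k i)).trans <| by
      simpa using ((hα i).smul (hplay.isBigO_mapping hcomp hF hz i)).norm_left

lemma isBigO_linearRegret (hplay : IsProjectedGradientPlay F X α x z)
    (hcomp : ∀ i, IsCompact (X i)) (hF : ∀ i, LipschitzWith K (Function.uncurry (F i)))
    (a : ι → E) (i : ι) : (fun k => linearRegret F a (x k) i) =O[atTop] (1 : ℕ → ℝ) :=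
  (isBigO_inner (hplay.isBigO_pseudoGradient hcomp hF i)
    (hplay.isBigO_sub_const hcomp a i)).congr_right fun _ => mul_one _

lemma isBigO_linearRegret_sub (hplay : IsProjectedGradientPlay F X α x z)
    (hcomp : ∀ i, IsCompact (X i)) (hF : ∀ i, LipschitzWith K (Function.uncurry (F i)))
    (hstep : ∀ i, (fun k => x (k + 1) i - x k i) =O[atTop] q) (a : ι → E) (i : ι) :
    (fun k => linearRegret F a (x (k + 1)) i - linearRegret F a (x k) i) =O[atTop] q := by
  have gradient_step : (fun k => pseudoGradient F (x (k + 1)) i - pseudoGradient F (x k) i)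
      =O[atTop] q := by
    refine isBigO_sub_of_lipschitzWith (hF i) (hstep i) ?_
    simpa only [aggregate_sub] using isBigO_aggregate (x := fun k => x (k + 1) - x k) hstep
  have moved := isBigO_inner gradient_step
    ((hplay.isBigO_sub_const hcomp a i).comp_tendsto (tendsto_add_atTop_nat 1))
  have turned := isBigO_inner (hplay.isBigO_pseudoGradient hcomp hF i) (hstep i)
  refine ((moved.congr_right fun k => ?_).add (turned.congr_right fun k => ?_)).congr_left
    fun k => ?_
  · simp
  · simp
  · simp only [linearRegret, Function.comp_apply, inner_sub_left, inner_sub_right]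
    ring

/-- The error in the descent of `‖x k i - a i‖ ^ 2` along projected gradient play, relative to exact
knowledge of the aggregate and vanishing stepsizes. -/
noncomputable def descentError (F : ι → E → E → E) (α : ι → ℕ → ℝ) (x z : ℕ → ι → E) (a : ι → E)
    (i : ι) (k : ℕ) : ℝ :=
  2 * (α i k * ⟪pseudoGradient F (x k) i - F i (x k i) (z (k + 1) i), x k i - a i⟫) +
    ‖α i k • F i (x k i) (z (k + 1) i)‖ ^ 2

lemma norm_sub_sq_le (hplay : IsProjectedGradientPlay F X α x z) (hconv : ∀ i, Convex ℝ (X i))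
    (ha : ∀ i, a i ∈ X i) (i : ι) (k : ℕ) :
    ‖x (k + 1) i - a i‖ ^ 2 ≤
      ‖x k i - a i‖ ^ 2 - α i k * (2 * linearRegret F a (x k) i) + descentError F α x z a i k := by
  refine ((hplay.isNearestPoint k i).norm_sub_sq_le (hconv i) (ha i)).trans_eq ?_
  rw [descentError, linearRegret, inner_sub_left, real_inner_smul_left]
  ring

lemma summable_descentError (hplay : IsProjectedGradientPlay F X α x z)
    (hcomp : ∀ i, IsCompact (X i)) (hF : ∀ i, LipschitzWith K (Function.uncurry (F i)))
    (hz : ∀ i, (fun k => z (k + 1) i - aggregate (x k)) =O[atTop] (1 : ℕ → ℝ))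
    (hzδ : ∀ i, (fun k => z (k + 1) i - aggregate (x k)) =O[atTop] δ)
    (hα : ∀ i, α i =O[atTop] q) (hq : Summable fun k => q k ^ 2)
    (hqδ : Summable fun k => q k * δ k) (a : ι → E) (i : ι) :
    Summable (descentError F α x z a i) := by
  have mismatch : (fun k => pseudoGradient F (x k) i - F i (x k i) (z (k + 1) i))
      =O[atTop] δ := by
    refine isBigO_sub_of_lipschitzWith (hF i) (by simpa using isBigO_zero δ atTop) ?_
    simpa only [neg_sub] using (hzδ i).neg_left
  have linear : (fun k => α i k *
      ⟪pseudoGradient F (x k) i - F i (x k i) (z (k + 1) i), x k i - a i⟫) =O[atTop]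
      fun k => q k * δ k := by
    simpa using (hα i).mul (isBigO_inner mismatch (hplay.isBigO_sub_const hcomp a i))
  have quadratic : (fun k => ‖α i k • F i (x k i) (z (k + 1) i)‖ ^ 2) =O[atTop]
      fun k => q k ^ 2 := by
    simpa using ((hα i).smul (hplay.isBigO_mapping hcomp hF hz i)).norm_left.pow 2
  exact ((summable_of_isBigO_nat hqδ linear).mul_left 2).add (summable_of_isBigO_nat hq quadratic)

end IsProjectedGradientPlay

variable {l : ι → ℕ → ℕ} {σ₁ σ₂ : ℕ} {ρ : ℕ → ℝ}

theorem tendsto_and_summable_of_isProjectedGradientPlay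
    (hplay : IsProjectedGradientPlay F X (fun i => stepsize ρ (l i)) x z)
    (hconv : ∀ i, Convex ℝ (X i)) (hcomp : ∀ i, IsCompact (X i))
    (hF : ∀ i, LipschitzWith K (Function.uncurry (F i))) (hl : AreCounters l σ₁ σ₂)
    (hσ₁ : σ₁ ≠ 0) (hρ : ∀ t, 0 ≤ ρ t) (hanti : Antitone ρ) (hsq : Summable fun t => ρ t ^ 2)
    (hz : ∀ i, (fun k => z (k + 1) i - aggregate (x k)) =O[atTop] (1 : ℕ → ℝ))
    (hzδ : ∀ i, (fun k => z (k + 1) i - aggregate (x k)) =O[atTop] δ)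
    (hδ : Summable fun k => slowed ρ σ₁ k * δ k) (ha : ∀ i, a i ∈ X i)
    (hregret : ∀ k, 0 ≤ ∑ i, linearRegret F a (x k) i) (i₀ : ι) :
    (∃ c, Tendsto (fun k => ∑ i, ‖x k i - a i‖ ^ 2) atTop (𝓝 c)) ∧
      Summable fun k => stepsize ρ (l i₀) k * ∑ i, linearRegret F a (x k) i := by
  set q := slowed ρ σ₁
  have q_sq : Summable fun k => q k ^ 2 := summable_slowed_sq hsq hσ₁
  have step := hplay.isBigO_step hconv hcomp hF hz (hl.isBigO_stepsize hρ hanti)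
  have gap_tendsto : ∀ i, Tendsto (fun k => (clock ρ (l i) k - clock ρ (l i₀) k) *
      (2 * linearRegret F a (x k) i)) atTop (𝓝 0) := fun i => by
    refine IsBigO.trans_tendsto ?_ (tendsto_slowed hρ hsq hσ₁)
    simpa using (hl.isBigO_clock_sub hρ hanti i i₀).mul
      ((hplay.isBigO_linearRegret hcomp hF a i).const_mul_left 2)
  have variation : ∀ i, Summable fun k => (clock ρ (l i) (k + 1) - clock ρ (l i₀) (k + 1)) *
      (2 * linearRegret F a (x (k + 1)) i - 2 * linearRegret F a (x k) i) := fun i => by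
    refine summable_of_isBigO_nat q_sq ?_
    simpa only [mul_sub, sq] using (hl.isBigO_clock_sub_succ hρ hanti i i₀).mul
      ((hplay.isBigO_linearRegret_sub hcomp hF step a i).const_mul_left 2)
  have descent := tendsto_and_summable_of_asynchronous_descent
    (u := fun i k => ‖x k i - a i‖ ^ 2) (h := fun i k => 2 * linearRegret F a (x k) i)
    (fun i k => sq_nonneg _)
    (fun i k => by
      rw [← stepsize_eq_clock_sub (hl.le_succ i k)]
      exact hplay.norm_sub_sq_le hconv ha i k)
    (hplay.summable_descentError hcomp hF hz hzδ (hl.isBigO_stepsize hρ hanti) q_sq hδ a)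
    (hl.monotone_clock hρ i₀)
    (fun k => by rw [← Finset.mul_sum]; exact mul_nonneg zero_le_two (hregret k))
    gap_tendsto variation
  refine descent.imp_right fun hsum => (hsum.mul_left 2⁻¹).congr fun k => ?_
  rw [stepsize_eq_clock_sub (hl.le_succ i₀ k), ← Finset.mul_sum]
  ring

theorem IsProjectedGradientPlay.tendsto_of_isVariationalEquilibrium [Nonempty ι]
    (hplay : IsProjectedGradientPlay F X (fun i => stepsize ρ (l i)) x z)
    (hconv : ∀ i, Convex ℝ (X i)) (hcomp : ∀ i, IsCompact (X i))
    (hF : ∀ i, LipschitzWith K (Function.uncurry (F i))) (hmono : IsStrictlyMonotone F X)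
    (ha : IsVariationalEquilibrium F X a) {N : ℕ} {A : ℕ → Matrix (Fin N) (Fin N) ℝ}
    {e : ι ↪ Fin N} {v : ℕ → Fin N → E} {y : ℕ → Fin N → ℝ} {B r η : ℝ}
    (hps : IsPushSum e A x v y z) (hA : IsGeometricallyErgodic A B r) (hr : 0 < r) (hr1 : r < 1)
    (hη : 0 < η) (hy : ∀ k i, η ≤ y (k + 1) (e i)) (hl : AreCounters l σ₁ σ₂) (hσ₁ : σ₁ ≠ 0)
    (hρ : ∀ t, 0 < ρ t) (hanti : Antitone ρ) (hsq : Summable fun t => ρ t ^ 2)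
    (hdiv : ¬ Summable ρ) (i : ι) : Tendsto (fun k => x k i) atTop (𝓝 (a i)) := by
  have hρ_nonneg : ∀ t, 0 ≤ ρ t := fun t => (hρ t).le
  have q_pos : ∀ k, 0 < slowed ρ σ₁ k := fun k => hρ _
  have bounded := hplay.isBigO_one hcomp
  have crude := hps.isBigO_sub_aggregate_one hA hr hr1 hη hy bounded
  have step := hplay.isBigO_step hconv hcomp hF crude (hl.isBigO_stepsize hρ_nonneg hanti)
  have fine := hps.isBigO_sub_aggregate hA hr hη hy bounded q_pos step
  have q_conv : Summable fun k => slowed ρ σ₁ k * geomConv r (slowed ρ σ₁) k :=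
    summable_mul_geomConv hr.le hr1 (fun k => (q_pos k).le) (antitone_slowed hanti σ₁)
      (summable_slowed_sq hsq hσ₁)
  let i₀ := Classical.arbitrary ι
  obtain ⟨⟨c, hc⟩, hsum⟩ := tendsto_and_summable_of_isProjectedGradientPlay hplay hconv hcomp hF hl
    hσ₁ hρ_nonneg hanti hsq crude fine q_conv ha.1
    (fun k => ha.sum_linearRegret_nonneg hmono (hplay.mem k)) i₀
  have hc_zero : c = 0 := by
    simpa using eq_of_tendsto_of_summable_mul (isCompact_univ_pi hcomp) (a := a)
      (H := fun b => ∑ i, linearRegret F a b i) (V := fun b => ∑ i, ‖b i - a i‖ ^ 2)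
      (continuous_finsetSum _ fun i _ =>
        continuous_linearRegret (fun i => (hF i).continuous) a i).continuousOn
      (fun b hb hne => ha.sum_linearRegret_pos hmono (by simpa using hb) hne)
      (fun k => by simpa using hplay.mem k) (stepsize_nonneg hρ_nonneg (l i₀))
      (hl.not_summable_stepsize hσ₁ hρ_nonneg hdiv i₀) hsum (by fun_prop) hc
  rw [hc_zero] at hc
  have sq_tendsto : Tendsto (fun k => ‖x k i - a i‖ ^ 2) atTop (𝓝 0) :=
    squeeze_zero (fun k => sq_nonneg _) (fun k => Finset.single_le_sum
      (f := fun i => ‖x k i - a i‖ ^ 2) (fun i _ => sq_nonneg _) (Finset.mem_univ i)) hc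
  rw [tendsto_iff_norm_sub_tendsto_zero]
  simpa using sq_tendsto.sqrt

end Convergence
lemma lipschitzWith_uncurry_of_norm_sub_le {E G H : Type*} [SeminormedAddCommGroup E]
    [SeminormedAddCommGroup G] [SeminormedAddCommGroup H] {L : ℝ} (hL : 0 ≤ L) {F : E → G → H}
    (hF : ∀ a a' b b', ‖F a b - F a' b'‖ ≤ L * √(‖a - a'‖ ^ 2 + ‖b - b'‖ ^ 2)) :
    LipschitzWith (L * √2).toNNReal (Function.uncurry F) := by
  refine LipschitzWith.of_dist_le' fun s t => ?_
  have hfst : ‖s.1 - t.1‖ ≤ dist s t := by rw [dist_eq_norm]; exact norm_fst_le (s - t)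
  have hsnd : ‖s.2 - t.2‖ ≤ dist s t := by rw [dist_eq_norm]; exact norm_snd_le (s - t)
  calc dist (F s.1 s.2) (F t.1 t.2) ≤ L * √(‖s.1 - t.1‖ ^ 2 + ‖s.2 - t.2‖ ^ 2) := by
        rw [dist_eq_norm]; exact hF _ _ _ _
    _ ≤ L * √(dist s t ^ 2 + dist s t ^ 2) := by gcongr
    _ = L * √2 * dist s t := by
        rw [← two_mul, Real.sqrt_mul zero_le_two, Real.sqrt_sq dist_nonneg, mul_assoc]

lemma extend_castLE {E : Type*} [Zero E] {n N : ℕ} (hnN : n ≤ N) (g : Fin n → E) (j : Fin N) :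
    Function.extend (Fin.castLEEmb hnN) g 0 j = if h : (j : ℕ) < n then g ⟨j, h⟩ else 0 := by
  split_ifs with h
  · exact (Fin.castLEEmb hnN).injective.extend_apply g 0 ⟨j, h⟩
  · refine Function.extend_apply' _ _ _ ?_
    rintro ⟨i, rfl⟩
    exact h i.isLt

lemma areCounters_of_activation {ι : Type*} {s : ℕ → Finset ι} {l : ι → ℕ → ℕ} {σ₁ σ₂ : ℕ}
    (hcover : ∀ k i, ∃ u, k + 1 ≤ u ∧ u ≤ k + σ₁ ∧ i ∈ s u)
    (hactive : ∀ i k, i ∈ s k → l i k + 1 ≤ l i (k + 1) ∧ l i (k + 1) ≤ l i k + σ₂)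
    (hidle : ∀ i k, i ∉ s k → l i (k + 1) = l i k)
    (hgap : ∀ i j k, l i k ≤ l j k + σ₂) : AreCounters l σ₁ σ₂ where
  le_succ i k := by by_cases hi : i ∈ s k <;> grind
  succ_le i k := by by_cases hi : i ∈ s k <;> grind
  exists_lt i k :=
    let ⟨u, hu_ge, hu_le, hu⟩ := hcover k i
    ⟨u, hu_ge, hu_le, (hactive i u hu).1⟩
  gap := hgap

lemma isProjectedGradientPlay_of_activation {ι E : Type*} [NormedAddCommGroup E]
    [NormedSpace ℝ E] {F : ι → E → E → E} {X : ι → Set E} {α : ι → ℕ → ℝ}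
    {x z : ℕ → ι → E} {s : ℕ → Finset ι} (hx₀ : ∀ i, x 0 i ∈ X i)
    (hactive : ∀ k i, i ∈ s k →
      IsNearestPoint (X i) (x k i - α i k • F i (x k i) (z (k + 1) i)) (x (k + 1) i))
    (hidle : ∀ k i, i ∉ s k → x (k + 1) i = x k i ∧ α i k = 0) :
    IsProjectedGradientPlay F X α x z := by
  have mem : ∀ k i, x k i ∈ X i := fun k i => by
    induction k with
    | zero => exact hx₀ i
    | succ k ih =>
      by_cases hi : i ∈ s k
      · exact (hactive k i hi).1
      · rwa [(hidle k i hi).1]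
  refine ⟨hx₀, fun k i => ?_⟩
  by_cases hi : i ∈ s k
  · exact hactive k i hi
  · rw [(hidle k i hi).1, (hidle k i hi).2, zero_smul, sub_zero]
    exact isNearestPoint_self (mem k i)

lemma isPushSum_castLEEmb {E : Type*} [NormedAddCommGroup E] [NormedSpace ℝ E] {n N : ℕ}
    (hnN : n ≤ N) {A : ℕ → Matrix (Fin N) (Fin N) ℝ} {v w : ℕ → Fin N → E} {y : ℕ → Fin N → ℝ}
    {x z : ℕ → Fin n → E} (hv₀ : ∀ i : Fin n, v 0 (Fin.castLE hnN i) = x 0 i)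
    (hy₀ : ∀ i : Fin n, y 0 (Fin.castLE hnN i) = 1)
    (hv₀_virtual : ∀ j : Fin N, n ≤ (j : ℕ) → v 0 j = 0)
    (hy₀_virtual : ∀ j : Fin N, n ≤ (j : ℕ) → y 0 j = 0)
    (hw : ∀ k j, w (k + 1) j = ∑ m, A k j m • v k m)
    (hy : ∀ k j, y (k + 1) j = ∑ m, A k j m * y k m)
    (hz : ∀ k i, z (k + 1) i = (y (k + 1) (Fin.castLE hnN i))⁻¹ • w (k + 1) (Fin.castLE hnN i))
    (hv : ∀ k (j : Fin N), v (k + 1) j =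
      w (k + 1) j + (if h : (j : ℕ) < n then x (k + 1) ⟨j, h⟩ - x k ⟨j, h⟩ else 0)) :
    IsPushSum (Fin.castLEEmb hnN) A x v y z where
  v_zero := funext fun j => by
    rw [extend_castLE]
    split_ifs with h
    · exact hv₀ ⟨j, h⟩
    · exact hv₀_virtual j (not_lt.1 h)
  y_zero := funext fun j => by
    rw [extend_castLE]
    split_ifs with h
    · exact hy₀ ⟨j, h⟩
    · exact hy₀_virtual j (not_lt.1 h)
  v_succ k j := by rw [hv, hw, extend_castLE]; rfl
  y_succ := hy
  z_succ k i := by rw [hz, hw]; rfl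

theorem asynchronous_algorithm_converges_to_nash_equilibrium_general {ι E : Type*} [Fintype ι]
    [Nonempty ι] [DecidableEq ι] [NormedAddCommGroup E] [InnerProductSpace ℝ E] [CompleteSpace E]
    {f : ι → E → E → ℝ} {X : ι → Set E} (hX_conv : ∀ i, Convex ℝ (X i))
    (hX_comp : ∀ i, IsCompact (X i)) (hf : ∀ i, Differentiable ℝ (Function.uncurry (f i)))
    (hf_conv : ∀ a : ι → E, (∀ j, a j ∈ X j) → ∀ i,
      ConvexOn ℝ (X i) fun u => f i u (aggregate (Function.update a i u)))
    {K : NNReal} (hF : ∀ i, LipschitzWith K (Function.uncurry (gameMap f i)))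
    (hmono : IsStrictlyMonotone (gameMap f) X)
    {N : ℕ} {A : ℕ → Matrix (Fin N) (Fin N) ℝ} {e : ι ↪ Fin N} {v : ℕ → Fin N → E}
    {y : ℕ → Fin N → ℝ} {x z : ℕ → ι → E} {B r η : ℝ}
    (hps : IsPushSum e A x v y z) (hA : IsGeometricallyErgodic A B r) (hr : 0 < r) (hr1 : r < 1)
    (hη : 0 < η) (hy : ∀ k i, η ≤ y (k + 1) (e i))
    {l : ι → ℕ → ℕ} {σ₁ σ₂ : ℕ} (hl : AreCounters l σ₁ σ₂) (hσ₁ : σ₁ ≠ 0)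
    {ρ : ℕ → ℝ} (hρ : ∀ t, 0 < ρ t) (hρ_anti : Antitone ρ) (hρ_sq : Summable fun t => ρ t ^ 2)
    (hρ_div : ¬ Summable ρ)
    (hplay : IsProjectedGradientPlay (gameMap f) X (fun i => stepsize ρ (l i)) x z) :
    ∃ a, IsNashEquilibrium f X a ∧ (∀ b, IsNashEquilibrium f X b → b = a) ∧
      ∀ i, Tendsto (fun k => x k i) atTop (𝓝 (a i)) := by
  obtain ⟨a, ha⟩ := exists_isVariationalEquilibrium (fun i => ⟨_, hplay.mem 0 i⟩) hX_conv hX_comp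
    (fun i => (hF i).continuous) hmono
  simp only [isNashEquilibrium_iff_isVariationalEquilibrium hf hf_conv]
  exact ⟨a, ha, fun b hb => ha.eq hb hmono, hplay.tendsto_of_isVariationalEquilibrium hX_conv
    hX_comp hF hmono ha hps hA hr hr1 hη hy hl hσ₁ hρ hρ_anti hρ_sq hρ_div⟩

/-- Proposition 3: under Assumptions 1 and 2, with globally continuously differentiable
costs, globally L-Lipschitz game mappings, a non-summable stepsize generating sequence,
and the augmented push-sum dynamics with the ergodicity hypothesis, every player's
action `x_i(k)` converges to the `i`-th component of the unique Nash equilibrium. -/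
theorem asynchronous_algorithm_converges_to_nash_equilibrium
    (n N p : ℕ) (hn : 0 < n) (hnN : n ≤ N)
    (X : Fin n → Set (EuclideanSpace ℝ (Fin p)))
    -- nonempty convex compact action sets
    (hXne : ∀ i, (X i).Nonempty)
    (hXconv : ∀ i, Convex ℝ (X i))
    (hXcomp : ∀ i, IsCompact (X i))
    -- the game mappings, L-Lipschitz on ℝ^p × ℝ^p
    (F : Fin n → EuclideanSpace ℝ (Fin p) → EuclideanSpace ℝ (Fin p) →
      EuclideanSpace ℝ (Fin p))
    (L : ℝ) (hLpos : 0 < L)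
    (hFlip : ∀ i xi xi' z z',
      ‖F i xi z - F i xi' z'‖ ≤ L * Real.sqrt (‖xi - xi'‖ ^ 2 + ‖z - z'‖ ^ 2))
    -- nonnegative column-stochastic matrices
    (A : ℕ → Matrix (Fin N) (Fin N) ℝ)
    (hAnn : ∀ k i j, 0 ≤ A k i j)
    (hAcol : ∀ k j, ∑ i, A k i j = 1)
    -- states
    (v w : ℕ → Fin N → EuclideanSpace ℝ (Fin p))
    (y : ℕ → Fin N → ℝ)
    (x z : ℕ → Fin n → EuclideanSpace ℝ (Fin p))
    -- initialization
    (hx0 : ∀ i, x 0 i ∈ X i)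
    (hv0p : ∀ i : Fin n, v 0 (Fin.castLE hnN i) = x 0 i)
    (hy0p : ∀ i : Fin n, y 0 (Fin.castLE hnN i) = 1)
    (hv0v : ∀ j : Fin N, n ≤ (j : ℕ) → v 0 j = 0)
    (hy0v : ∀ j : Fin N, n ≤ (j : ℕ) → y 0 j = 0)
    -- activation sets
    (Aset : ℕ → Finset (Fin n))
    (hAsetne : ∀ k, (Aset k).Nonempty)
    (σ1 : ℕ) (hσ1 : 1 ≤ σ1)
    (hcover : ∀ k, ∀ i : Fin n, ∃ u, k + 1 ≤ u ∧ u ≤ k + σ1 ∧ i ∈ Aset u)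
    -- counters
    (l : Fin n → ℕ → ℕ) (σ2 : ℕ) (hσ2 : 1 ≤ σ2)
    (hl0 : ∀ i, l i 0 = 0)
    (hlact : ∀ i k, i ∈ Aset k → l i k + 1 ≤ l i (k + 1) ∧ l i (k + 1) ≤ l i k + σ2)
    (hlstay : ∀ i k, i ∉ Aset k → l i (k + 1) = l i k)
    -- stepsize generating sequence
    (ρ : ℕ → ℝ)
    (hρpos : ∀ t, 0 < ρ t)
    (hρmono : ∀ t, ρ (t + 1) ≤ ρ t)
    (hρsq : Summable fun t => ρ t ^ 2)
    (α : Fin n → ℕ → ℝ)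
    (hα : ∀ i k, α i k = ∑ t ∈ Finset.Ico (l i k) (l i (k + 1)), ρ t)
    -- push-sum dynamics
    (hw : ∀ k, ∀ j : Fin N, w (k + 1) j = ∑ m, A k j m • v k m)
    (hy : ∀ k, ∀ j : Fin N, y (k + 1) j = ∑ m, A k j m * y k m)
    (hz : ∀ k, ∀ i : Fin n,
      z (k + 1) i = (y (k + 1) (Fin.castLE hnN i))⁻¹ • w (k + 1) (Fin.castLE hnN i))
    -- the projected pseudo-gradient update for active players
    (hxup : ∀ k, ∀ i : Fin n, i ∈ Aset k →
      x (k + 1) i ∈ X i ∧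
      ∀ u ∈ X i,
        ‖x k i - α i k • F i (x k i) (z (k + 1) i) - x (k + 1) i‖ ≤
        ‖x k i - α i k • F i (x k i) (z (k + 1) i) - u‖)
    (hxstay : ∀ k, ∀ i : Fin n, i ∉ Aset k → x (k + 1) i = x k i)
    (hv : ∀ k, ∀ j : Fin N, v (k + 1) j =
      w (k + 1) j + (if h : (j : ℕ) < n then x (k + 1) ⟨j, h⟩ - x k ⟨j, h⟩ else 0))
    -- ergodicity hypothesis
    (B' lam η : ℝ) (hB' : 0 < B') (hlam : lam ∈ Set.Ioo (0 : ℝ) 1)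
    (hη : η ∈ Set.Ioc (0 : ℝ) 1)
    (φvec : ℕ → Fin N → ℝ)
    (hφnn : ∀ k i, 0 ≤ φvec k i)
    (hφsum : ∀ k, ∑ i, φvec k i = 1)
    (herg : ∀ k t, t ≤ k → ∀ i j : Fin N, |backProd A k t i j - φvec k i| ≤ B' * lam ^ t)
    (hylb : ∀ i : Fin n, ∀ k, 1 ≤ k → η ≤ y k (Fin.castLE hnN i))
    -- game data: costs and Assumption 1
    (f : Fin n → EuclideanSpace ℝ (Fin p) → EuclideanSpace ℝ (Fin p) → ℝ)
    (hfC1 : ∀ i, ContDiff ℝ 1 (fun q : EuclideanSpace ℝ (Fin p) × EuclideanSpace ℝ (Fin p) =>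
      f i q.1 q.2))
    (hfconv : ∀ i, ∀ xbarmi ∈ (n : ℝ)⁻¹ • ∑ j ∈ Finset.univ.erase i, X j,
      ConvexOn ℝ (X i) (fun xi => f i xi ((n : ℝ)⁻¹ • xi + xbarmi)))
    -- the game mappings Fᵢ(xᵢ, z) = ∇_{xᵢ} fᵢ(xᵢ, z) + (1/n) ∇_z fᵢ(xᵢ, z)
    (hF : ∀ i xi zz, F i xi zz =
      gradient (fun u => f i u zz) xi + (n : ℝ)⁻¹ • gradient (fun u => f i xi u) zz)
    -- Assumption 2: strict monotonicity of the pseudo-gradient on X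
    (hmono : ∀ a a' : Fin n → EuclideanSpace ℝ (Fin p),
      (∀ i, a i ∈ X i) → (∀ i, a' i ∈ X i) → a ≠ a' →
      0 < ∑ i, ⟪F i (a i) ((n : ℝ)⁻¹ • ∑ j, a j) -
                F i (a' i) ((n : ℝ)⁻¹ • ∑ j, a' j), a i - a' i⟫)
    -- bounded counter mismatch between players
    (hlgap : ∀ i j : Fin n, ∀ k, l i k ≤ l j k + σ2)
    -- the stepsize generating sequence is non-summable: ∑ₜ ρ(t) = ∞
    (hρdiv : ¬ Summable ρ) :
    -- conclusion: x_i(k) → x*_i where x* is the unique Nash equilibrium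
    ∃ xstar : Fin n → EuclideanSpace ℝ (Fin p),
      ((∀ i, xstar i ∈ X i) ∧
       ∀ i, ∀ xi ∈ X i,
        f i (xstar i) ((n : ℝ)⁻¹ • ∑ j, xstar j) ≤
        f i xi ((n : ℝ)⁻¹ • xi + (n : ℝ)⁻¹ • ∑ j ∈ Finset.univ.erase i, xstar j)) ∧
      (∀ b : Fin n → EuclideanSpace ℝ (Fin p),
        ((∀ i, b i ∈ X i) ∧
         ∀ i, ∀ xi ∈ X i,
          f i (b i) ((n : ℝ)⁻¹ • ∑ j, b j) ≤
          f i xi ((n : ℝ)⁻¹ • xi + (n : ℝ)⁻¹ • ∑ j ∈ Finset.univ.erase i, b j)) →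
        b = xstar) ∧
      (∀ i : Fin n, Tendsto (fun k => x k i) atTop (nhds (xstar i))) := by
  have : Nonempty (Fin n) := Fin.pos_iff_nonempty.1 hn
  obtain rfl : F = gameMap f := by
    funext i a b
    simp only [hF, gameMap, Fintype.card_fin]
  obtain rfl : α = fun i => stepsize ρ (l i) := funext₂ hα
  have idle_step : ∀ k i, i ∉ Aset k → stepsize ρ (l i) k = 0 := fun k i hi => by
    rw [stepsize, hlstay i k hi, Finset.Ico_self, Finset.sum_empty]
  simpa only [isNashEquilibrium_iff_sum_erase, Fintype.card_fin] using
    asynchronous_algorithm_converges_to_nash_equilibrium_general hXconv hXcomp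
      (fun i => (hfC1 i).differentiable one_ne_zero)
      (fun a ha i => convexOn_aggregate_update (by simpa only [Fintype.card_fin] using hfconv i) ha)
      (fun i => lipschitzWith_uncurry_of_norm_sub_le hLpos.le (hFlip i))
      (fun a b ha hb hab => by
        simpa only [pseudoGradient, aggregate, Fintype.card_fin] using hmono a b ha hb hab)
      (isPushSum_castLEEmb hnN hv0p hy0p hv0v hy0v hw hy hz hv) ⟨φvec, herg⟩ hlam.1 hlam.2 hη.1
      (fun k i => hylb i (k + 1) k.succ_pos)
      (areCounters_of_activation hcover hlact hlstay hlgap) (Nat.one_le_iff_ne_zero.1 hσ1)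
      hρpos (antitone_nat_of_succ_le hρmono) hρsq hρdiv
      (isProjectedGradientPlay_of_activation hx0 hxup
        fun k i hi => ⟨hxstay k i hi, idle_step k i hi⟩)
end

section
/- (Appendix Lemma 3) Let {x_k}, {u_k}, {w_k} and {v_k} be real sequences such that x_{k+1} ≤ x_k − u_k + w_k + v_k for all k ≥ 0, where x_k ≥ 0, u_k ≥ 0 and w_k ≥ 0 for all k, ∑_{k=0}^∞ w_k < ∞, and the series ∑_{k=0}^∞ v_k converges (its partial sums have a finite limit). Then {x_k} converges to a finite limit and ∑_{k=0}^∞ u_k < ∞. -/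
open Filter Topology

/-!
Subtracting the partial sums of the perturbation from an almost decreasing sequence makes it
decreasing, so such a sequence converges as soon as it is bounded below. Both `x k` and
`x k + ∑ i < k, u i` are almost decreasing with the same perturbation; the difference of their
limits is the sum of `u`.
-/

section

variable {α : Type*} [TopologicalSpace α]

theorem hasSum_of_nonneg_of_tendsto_sum_range [AddCommMonoid α] [PartialOrder α]
    [IsOrderedAddMonoid α] [OrderClosedTopology α] [SupConvergenceClass α]
    {u : ℕ → α} {a : α} (hu : ∀ k, 0 ≤ u k)
    (hsum : Tendsto (fun n => ∑ k ∈ Finset.range n, u k) atTop (𝓝 a)) : HasSum u a := by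
  have hmono : Monotone fun s : Finset ℕ => ∑ k ∈ s, u k := Finset.sum_mono_set_of_nonneg hu
  have hlub : IsLUB (Set.range fun n => ∑ k ∈ Finset.range n, u k) a :=
    isLUB_of_tendsto_atTop (hmono.comp Finset.range_mono) hsum
  refine tendsto_atTop_isLUB hmono ⟨?_, fun b hb => hlub.2 ?_⟩
  · rintro _ ⟨s, rfl⟩
    obtain ⟨n, hsn⟩ := s.exists_nat_subset_range
    exact (hmono hsn).trans (hlub.1 ⟨n, rfl⟩)
  · rintro _ ⟨n, rfl⟩
    exact hb ⟨Finset.range n, rfl⟩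

variable [AddCommGroup α] [ConditionallyCompleteLattice α] [IsOrderedAddMonoid α]
  [InfConvergenceClass α] [BoundedLENhdsClass α] {x u e : ℕ → α} {S : α}

theorem exists_tendsto_of_succ_le_add [ContinuousAdd α] (hx : BddBelow (Set.range x))
    (hrec : ∀ k, x (k + 1) ≤ x k + e k)
    (he : Tendsto (fun n => ∑ k ∈ Finset.range n, e k) atTop (𝓝 S)) :
    ∃ L, Tendsto x atTop (𝓝 L) := by
  have hanti : Antitone fun n => x n - ∑ k ∈ Finset.range n, e k := by
    refine antitone_nat_of_succ_le fun n => ?_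
    rw [Finset.sum_range_succ, sub_le_iff_le_add, ← add_assoc, sub_add_cancel]
    exact hrec n
  have hbdd : BddBelow (Set.range fun n => x n - ∑ k ∈ Finset.range n, e k) := by
    obtain ⟨b, hb⟩ := hx
    obtain ⟨C, hC⟩ := he.bddAbove_range
    refine ⟨b - C, ?_⟩
    rintro _ ⟨n, rfl⟩
    exact sub_le_sub (hb ⟨n, rfl⟩) (hC ⟨n, rfl⟩)
  exact ⟨_, ((tendsto_atTop_ciInf hanti hbdd).add he).congr fun n => sub_add_cancel _ _⟩

theorem supermartingale_type_convergence_general [IsTopologicalAddGroup α]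
    [OrderClosedTopology α] [SupConvergenceClass α]
    (hx : BddBelow (Set.range x)) (hu : ∀ k, 0 ≤ u k)
    (hrec : ∀ k, x (k + 1) ≤ x k - u k + e k)
    (he : Tendsto (fun n => ∑ k ∈ Finset.range n, e k) atTop (𝓝 S)) :
    (∃ L, Tendsto x atTop (𝓝 L)) ∧ Summable u := by
  obtain ⟨L, hL⟩ : ∃ L, Tendsto x atTop (𝓝 L) :=
    exists_tendsto_of_succ_le_add hx
      (fun k => (hrec k).trans (add_le_add_left (sub_le_self _ (hu k)) _)) he
  obtain ⟨M, hM⟩ : ∃ M, Tendsto (fun n => x n + ∑ k ∈ Finset.range n, u k) atTop (𝓝 M) := by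
    refine exists_tendsto_of_succ_le_add (hx.range_mono _ fun n => ?_) (fun n => ?_) he
    · exact le_add_of_nonneg_right (Finset.sum_nonneg fun k _ => hu k)
    · calc
        x (n + 1) + ∑ k ∈ Finset.range (n + 1), u k
          ≤ x n - u n + e n + ∑ k ∈ Finset.range (n + 1), u k := by gcongr; exact hrec n
        _ = x n + ∑ k ∈ Finset.range n, u k + e n := by rw [Finset.sum_range_succ]; abel
  have hsum : Tendsto (fun n => ∑ k ∈ Finset.range n, u k) atTop (𝓝 (M - L)) :=
    (hM.sub hL).congr fun n => add_sub_cancel_left _ _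
  exact ⟨⟨L, hL⟩, (hasSum_of_nonneg_of_tendsto_sum_range hu hsum).summable⟩

end

/-- Appendix Lemma 3: if nonnegative sequences satisfy
`x_{k+1} ≤ x_k − u_k + w_k + v_k` with `∑ w_k < ∞` and `∑ v_k` convergent, then
`{x_k}` converges to a finite limit and `∑ u_k < ∞`. -/
theorem supermartingale_type_convergence (x u w v : ℕ → ℝ)
    (hx : ∀ k, 0 ≤ x k) (hu : ∀ k, 0 ≤ u k) (hw : ∀ k, 0 ≤ w k)
    (hrec : ∀ k, x (k + 1) ≤ x k - u k + w k + v k)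
    (hwsum : Summable w)
    (hvconv : ∃ S : ℝ, Tendsto (fun K => ∑ k ∈ Finset.range K, v k) atTop (nhds S)) :
    (∃ Lx : ℝ, Tendsto x atTop (nhds Lx)) ∧ Summable u := by
  obtain ⟨S, hS⟩ := hvconv
  exact supermartingale_type_convergence_general ⟨0, Set.forall_mem_range.2 hx⟩ hu
    (fun k => (hrec k).trans_eq (add_assoc _ _ _))
    ((hwsum.tendsto_sum_tsum_nat.add hS).congr fun n => Finset.sum_add_distrib.symm)
end

section
/- (Lemma 1(a), activation frequency) Let n ≥ 1 and 0 < τ̲ ≤ τ̄ < ∞. For each i ∈ {1,…,n} let t_i : ℕ → ℝ be strictly increasing with t_i(0) = 0 and τ̲ ≤ t_i(m+1) − t_i(m) ≤ τ̄ for all m ∈ ℕ. Let T := ⋃_{i=1}^n { t_i(m) : m ∈ ℕ } and let t : ℕ → ℝ be a strictly increasing map with range exactly T. Set b₁ := (n−1)·⌈τ̄/τ̲⌉ + 1. Then for every k ≥ 0 and every i ∈ {1,…,n} there exists m ∈ ℕ with t(k) < t_i(m) ≤ t(k + b₁). -/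
/-! Suppose player `i` is idle on the window `(t k, t (k + b₁)]`. Its next activation comes at most
`τhi` after `t k`, so the `b₁` merged times in the window lie in an interval of length `τhi` and
belong to the other `n - 1` players. But each of these has at most `⌈τhi / τlo⌉` activations there,
because cutting the interval into cells of length `τlo` puts at most one of them in each cell. -/

open Finset

section Separated

variable {K : Type*} [Field K] [LinearOrder K] [IsStrictOrderedRing K] [FloorSemiring K]
  {τ a b : K} {s : Finset K}

theorem card_le_ceil_div_of_pairwise_le_abs_sub (hτ : 0 < τ) (hs : (s : Set K) ⊆ Set.Ico a b)
    (hsep : (s : Set K).Pairwise fun x y ↦ τ ≤ |x - y|) : #s ≤ ⌈(b - a) / τ⌉₊ := by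
  let cell (x : K) : ℕ := ⌊(x - a) / τ⌋₊
  have cell_le {x : K} (hx : x ∈ s) : (cell x : K) * τ ≤ x - a :=
    (le_div_iff₀ hτ).1 <| Nat.floor_le <| div_nonneg (sub_nonneg.2 (hs hx).1) hτ.le
  have lt_cell (x : K) : x - a < (cell x + 1) * τ :=
    (div_lt_iff₀ hτ).1 <| Nat.lt_floor_add_one _
  have cell_mapsTo : Set.MapsTo cell s (range ⌈(b - a) / τ⌉₊) := fun x hx ↦ by
    have hxb : (cell x : K) < (b - a) / τ :=
      (lt_div_iff₀ hτ).2 <| (cell_le hx).trans_lt <| sub_lt_sub_right (hs hx).2 a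
    exact mem_coe.2 <| mem_range.2 <| Nat.lt_ceil.2 hxb
  have cell_injOn : Set.InjOn cell s := fun x hx y hy hxy ↦ by
    refine hsep.eq hx hy <| not_le.2 <| abs_lt.2 ?_
    have le_x := cell_le hx
    have x_lt := lt_cell x
    rw [hxy] at le_x x_lt
    constructor <;> linarith [cell_le hy, lt_cell y]
  simpa only [card_range] using card_le_card_of_injOn cell cell_mapsTo cell_injOn

theorem card_le_card_mul_ceil_div_of_subset_iUnion {ι : Type*} {J : Finset ι} {A : ι → Set K}
    (hτ : 0 < τ) (hs : (s : Set K) ⊆ Set.Ico a b) (hsA : (s : Set K) ⊆ ⋃ j ∈ J, A j)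
    (hA : ∀ j ∈ J, (A j).Pairwise fun x y ↦ τ ≤ |x - y|) : #s ≤ #J * ⌈(b - a) / τ⌉₊ := by
  classical
  have s_subset : s ⊆ J.biUnion fun j ↦ {x ∈ s | x ∈ A j} := fun x hx ↦ by
    obtain ⟨j, hj, hxj⟩ := Set.mem_iUnion₂.1 (hsA hx)
    exact mem_biUnion.2 ⟨j, hj, mem_filter.2 ⟨hx, hxj⟩⟩
  refine (card_le_card s_subset).trans <| card_biUnion_le_card_mul _ _ _ fun j hj ↦ ?_
  refine card_le_ceil_div_of_pairwise_le_abs_sub hτ (fun x hx ↦ hs (mem_filter.1 hx).1) ?_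
  exact (hA j hj).mono fun x hx ↦ (mem_filter.1 hx).2

theorem le_card_mul_ceil_div_of_strictMono {ι : Type*} {J : Finset ι} {A : ι → Set K} {t : ℕ → K}
    {k d : ℕ} {L : K} (hτ : 0 < τ) (ht : StrictMono t)
    (htA : ∀ l ∈ Ioc k (k + d), t l ∈ ⋃ j ∈ J, A j) (hL : t (k + d) < t k + L)
    (hA : ∀ j ∈ J, (A j).Pairwise fun x y ↦ τ ≤ |x - y|) : d ≤ #J * ⌈L / τ⌉₊ := by
  classical
  have image_subset_Ico : ((Ioc k (k + d)).image t : Set K) ⊆ Set.Ico (t k) (t k + L) := by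
    simp only [coe_image, coe_Ioc, Set.image_subset_iff]
    exact fun l hl ↦ ⟨(ht hl.1).le, (ht.monotone hl.2).trans_lt hL⟩
  have image_subset_iUnion : ((Ioc k (k + d)).image t : Set K) ⊆ ⋃ j ∈ J, A j := by
    rw [coe_image, Set.image_subset_iff]
    exact fun l hl ↦ htA l (mem_coe.1 hl)
  simpa only [card_image_of_injective _ ht.injective, Nat.card_Ioc, Nat.add_sub_cancel_left,
    add_sub_cancel_left] using
    card_le_card_mul_ceil_div_of_subset_iUnion hτ image_subset_Ico image_subset_iUnion hA

end Separated

section Gaps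

variable {G : Type*} [AddCommGroup G] [LinearOrder G] [IsOrderedAddMonoid G] {τ : G} {u : ℕ → G}

theorem monotone_of_le_gap (hτ : 0 ≤ τ) (hu : ∀ m, τ ≤ u (m + 1) - u m) : Monotone u :=
  monotone_nat_of_le_succ fun m ↦ sub_nonneg.1 (hτ.trans (hu m))

theorem pairwise_range_le_abs_sub_of_le_gap (hτ : 0 ≤ τ) (hu : ∀ m, τ ≤ u (m + 1) - u m) :
    (Set.range u).Pairwise fun x y ↦ τ ≤ |x - y| := by
  have le_sub_of_lt {l m : ℕ} (hlm : l < m) : τ ≤ u m - u l :=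
    (hu l).trans <| sub_le_sub_right (monotone_of_le_gap hτ hu hlm) _
  rintro _ ⟨l, rfl⟩ _ ⟨m, rfl⟩ hne
  rcases lt_or_gt_of_ne (ne_of_apply_ne u hne) with hlm | hml
  · exact abs_sub_comm (u l) (u m) ▸ (le_sub_of_lt hlm).trans (le_abs_self _)
  · exact (le_sub_of_lt hml).trans (le_abs_self _)

theorem exists_lt_of_le_gap [Archimedean G] (hτ : 0 < τ) (hu : ∀ m, τ ≤ u (m + 1) - u m) (a : G) :
    ∃ m, a < u m := by
  have add_nsmul_le (m : ℕ) : u 0 + m • τ ≤ u m := by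
    induction m with
    | zero => simp
    | succ m ih =>
      rw [succ_nsmul, ← add_assoc]
      exact (add_le_add ih (hu m)).trans_eq (add_sub_cancel _ _)
  obtain ⟨m, hm⟩ := exists_lt_nsmul hτ (a - u 0)
  exact ⟨m, (sub_lt_iff_lt_add'.1 hm).trans_le (add_nsmul_le m)⟩

theorem exists_mem_Ioc_of_gap_le {a : G} (hu : ∀ m, u (m + 1) - u m ≤ τ) (h₀ : u 0 ≤ a + τ)
    (ha : ∃ m, a < u m) : ∃ m, u m ∈ Set.Ioc a (a + τ) := by
  classical
  refine ⟨Nat.find ha, Nat.find_spec ha, ?_⟩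
  rcases hm : Nat.find ha with _ | m
  · exact h₀
  · have hma : u m ≤ a := not_lt.1 <| Nat.find_min ha (hm ▸ m.lt_succ_self)
    exact (sub_le_iff_le_add'.1 (hu m)).trans (add_le_add_left hma τ)

end Gaps

theorem activation_frequency_general {ι K : Type*} [Fintype ι] [Field K] [LinearOrder K]
    [IsStrictOrderedRing K] [FloorSemiring K] {τlo τhi : K} (hτlo : 0 < τlo) {ti : ι → ℕ → K}
    (hsep : ∀ j m, τlo ≤ ti j (m + 1) - ti j m) {i : ι}
    (hgap : ∀ m, ti i (m + 1) - ti i m ≤ τhi) (hstart : ∀ j, ti i 0 ≤ ti j 0 + τhi)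
    {t : ℕ → K} (htmono : StrictMono t) (hrange : Set.range t ⊆ ⋃ j, Set.range (ti j)) (k : ℕ) :
    ∃ m, t k < ti i m ∧ ti i m ≤ t (k + ((Fintype.card ι - 1) * ⌈τhi / τlo⌉₊ + 1)) := by
  classical
  have : Archimedean K := archimedean_iff_nat_le.2 fun x ↦ ⟨⌈x⌉₊, Nat.le_ceil x⟩
  by_contra! hidle
  have t_mem (l : ℕ) : ∃ j m, ti j m = t l := by
    simpa only [Set.mem_iUnion, Set.mem_range] using hrange ⟨l, rfl⟩
  obtain ⟨m, hkm, hm⟩ : ∃ m, ti i m ∈ Set.Ioc (t k) (t k + τhi) := by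
    obtain ⟨j, l, hl⟩ := t_mem k
    have h₀ : ti j 0 ≤ t k := hl ▸ monotone_of_le_gap hτlo.le (hsep j) l.zero_le
    exact exists_mem_Ioc_of_gap_le hgap ((hstart j).trans (add_le_add_left h₀ τhi))
      (exists_lt_of_le_gap hτlo (hsep i) (t k))
  have window_others : ∀ l ∈ Ioc k (k + ((Fintype.card ι - 1) * ⌈τhi / τlo⌉₊ + 1)),
      t l ∈ ⋃ j ∈ univ.erase i, Set.range (ti j) := by
    intro l hl
    obtain ⟨hkl, hlb⟩ := mem_Ioc.1 hl
    obtain ⟨j, p, hp⟩ := t_mem l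
    have hji : j ≠ i := by
      rintro rfl
      exact (hidle p (hp ▸ htmono hkl)).not_ge (hp ▸ htmono.monotone hlb)
    exact Set.mem_iUnion₂.2 ⟨j, mem_erase.2 ⟨hji, mem_univ j⟩, p, hp⟩
  have window_le := le_card_mul_ceil_div_of_strictMono hτlo htmono window_others
    ((hidle m hkm).trans_le hm) fun j _ ↦ pairwise_range_le_abs_sub_of_le_gap hτlo.le (hsep j)
  rw [card_erase_of_mem (mem_univ i), card_univ] at window_le
  exact absurd window_le (Nat.lt_succ_self _).not_ge

/-- Lemma 1(a) (activation frequency): if each player's consecutive activation times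
are separated by at least `τlo` and at most `τhi`, and `t` enumerates in increasing
order the merged set of all activation times, then every player is activated at least
once within any window of `b₁ = (n−1)⌈τhi/τlo⌉ + 1` consecutive merged activation
times. -/
theorem activation_frequency (n : ℕ) (hn : 1 ≤ n)
    (τlo τhi : ℝ) (hτlo : 0 < τlo) (hτ : τlo ≤ τhi)
    (ti : Fin n → ℕ → ℝ)
    (hmono : ∀ i, StrictMono (ti i))
    (hzero : ∀ i, ti i 0 = 0)
    (hgap : ∀ i m, τlo ≤ ti i (m + 1) - ti i m ∧ ti i (m + 1) - ti i m ≤ τhi)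
    (t : ℕ → ℝ) (htmono : StrictMono t)
    (hrange : Set.range t = ⋃ i, Set.range (ti i)) :
    ∀ k, ∀ i : Fin n, ∃ m : ℕ,
      t k < ti i m ∧ ti i m ≤ t (k + ((n - 1) * ⌈τhi / τlo⌉₊ + 1)) := by
  intro k i
  simpa only [Fintype.card_fin] using activation_frequency_general hτlo (fun j m ↦ (hgap j m).1)
    (fun m ↦ (hgap i m).2) (fun j ↦ by linarith [hzero i, hzero j]) htmono hrange.subset k
end
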